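/- arXiv:0807.1825 — 2 statements merged into one kernel-verified Lean document; each statement's English description precedes it below -/
import Mathlib

section
/- Let 0 < α < 2, d ≥ 1, D = {x ∈ ℝ^d : x_d > 0}, and A_{d,−α} = Γ((d+α)/2) / (2^{−α} π^{d/2} |Γ(−α/2)|). The constant Γ((1+α)/2)²/π is optimal in the fractional Hardy inequality on ℝ^d for functions supported in D: for every K > Γ((1+α)/2)²/π there exists a smooth compactly supported u : ℝ^d → ℝ with support in D such that (1/2)·A_{d,−α} ∫_{ℝ^d} ∫_{ℝ^d} (u(x) − u(y))² / |x − y|^{d+α} dx dy < K ∫_D u(x)² x_d^{−α} dx. -/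
open MeasureTheory Real Set

/-- The open upper half-space in `ℝ^{d+1}`. -/
def halfSpace (d : ℕ) : Set (EuclideanSpace ℝ (Fin (d + 1))) :=
  {x | 0 < x (Fin.last d)}

/-- The normalizing constant `A_{d,-α}` of the fractional Laplacian in dimension `d`. -/
noncomputable def fracLapConst (d : ℕ) (α : ℝ) : ℝ :=
  Real.Gamma (((d : ℝ) + α) / 2) / (2 ^ (-α) * Real.pi ^ ((d : ℝ) / 2) * |Real.Gamma (-α / 2)|)

/-!
The Gagliardo energy of `u` is the integral of the squared `L²`-norms of its translation increments
against a power of the length of the translation. For `u (x', s) = φ x' * f s` the increment is at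
most the sum of the increments of the two factors. When `φ` varies slowly its own contribution is
negligible, and integrating the kernel over `x'` turns the contribution of `f` into the
one-dimensional energy of `f`, up to the factor `A_{1,-α} / A_{d+1,-α}` that the normalizations
absorb.

On the half-line take `f s = s ^ ((α - 1) / 2) * g (log s)` with `g` slowly varying, a cut-off of
the virtual extremal `s ^ ((α - 1) / 2)`. Substituting `y = x * r` in the energy of `f` turns
dilations into translations of `g`: the energy is a constant times `∫ g ^ 2`, plus a remainder
controlled by the translation increments of `g`. Half of the constant is `1 / α`, from the negative
half-line, plus the integral of `(1 - r ^ ((α - 1) / 2)) ^ 2 / (1 - r) ^ (1 + α)` over `(0, 1)`. An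
explicit primitive reduces it to a Beta value, which the duplication formula identifies with
`Γ((1 + α) / 2) ^ 2 / (π * A_{1,-α})`.
-/

open Filter Topology Module
open scoped ContDiff

section Increment

variable {E : Type*} [MeasurableSpace E]

/-- The squared `L²(μ)`-norm of the increment of `φ` under translation by `w`. A Gagliardo energy
is the integral of this function of `w` against a power of `‖w‖`. -/
noncomputable def l2Increment [Add E] (μ : Measure E) (φ : E → ℝ) (w : E) : ℝ :=
  ∫ x, (φ (x + w) - φ x) ^ 2 ∂μ

lemma l2Increment_nonneg [Add E] (μ : Measure E) (φ : E → ℝ) (w : E) :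
    0 ≤ l2Increment μ φ w :=
  integral_nonneg fun _ => sq_nonneg _

lemma measurable_l2Increment [Add E] [MeasurableAdd₂ E] (μ : Measure E) [SFinite μ] {φ : E → ℝ}
    (hφ : Measurable φ) : Measurable (l2Increment μ φ) :=
  (Measurable.stronglyMeasurable (f := fun p : E × E => (φ (p.2 + p.1) - φ p.2) ^ 2)
    (by fun_prop)).integral_prod_right.measurable

section MemLp

variable [AddGroup E] [MeasurableAdd E] {μ : Measure E} [μ.IsAddRightInvariant] {φ : E → ℝ}

lemma memLp_two_comp_add_right (hφ : MemLp φ 2 μ) (w : E) : MemLp (fun x => φ (x + w)) 2 μ :=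
  hφ.comp_measurePreserving (measurePreserving_add_right μ w)

lemma integrable_sq_sub_translate (hφ : MemLp φ 2 μ) (w : E) (a b : ℝ) :
    Integrable (fun x => (a * φ x - b * φ (x + w)) ^ 2) μ :=
  ((hφ.const_mul a).sub ((memLp_two_comp_add_right hφ w).const_mul b)).integrable_sq

lemma integrable_sq_increment (hφ : MemLp φ 2 μ) (w : E) :
    Integrable (fun x => (φ (x + w) - φ x) ^ 2) μ :=
  ((memLp_two_comp_add_right hφ w).sub hφ).integrable_sq

lemma integral_sq_sub_translate (hφ : MemLp φ 2 μ) (w : E) (a b : ℝ) :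
    ∫ x, (a * φ x - b * φ (x + w)) ^ 2 ∂μ
      = (a - b) ^ 2 * ∫ x, φ x ^ 2 ∂μ + a * b * l2Increment μ φ w := by
  have h_sq := hφ.integrable_sq
  have h_sq_add := (memLp_two_comp_add_right hφ w).integrable_sq
  have h_incr := integrable_sq_increment hφ w
  have h_expand : ∀ x, (a * φ x - b * φ (x + w)) ^ 2
      = a * (a - b) * φ x ^ 2 + b * (b - a) * φ (x + w) ^ 2 + a * b * (φ (x + w) - φ x) ^ 2 :=
    fun x => by ring
  simp_rw [h_expand, l2Increment]
  rw [integral_add (by fun_prop) (by fun_prop), integral_add (by fun_prop) (by fun_prop)]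
  simp only [integral_const_mul]
  rw [integral_add_right_eq_self fun x => φ x ^ 2]
  ring

lemma integral_mul_translate (hφ : MemLp φ 2 μ) (w : E) :
    ∫ x, φ x * φ (x + w) ∂μ = ∫ x, φ x ^ 2 ∂μ - l2Increment μ φ w / 2 := by
  have h_sq := hφ.integrable_sq
  have h_sq_add := (memLp_two_comp_add_right hφ w).integrable_sq
  have h_incr := integrable_sq_increment hφ w
  have h_polarize : ∀ x, φ x * φ (x + w)
      = 1 / 2 * φ x ^ 2 + 1 / 2 * φ (x + w) ^ 2 - 1 / 2 * (φ (x + w) - φ x) ^ 2 := fun x => by ring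
  simp_rw [h_polarize, l2Increment]
  rw [integral_sub (by fun_prop) (by fun_prop), integral_add (by fun_prop) (by fun_prop)]
  simp only [integral_const_mul]
  rw [integral_add_right_eq_self fun x => φ x ^ 2]
  ring

lemma l2Increment_le_four_mul (hφ : MemLp φ 2 μ) (w : E) :
    l2Increment μ φ w ≤ 4 * ∫ x, φ x ^ 2 ∂μ := by
  have h := integral_sq_sub_translate hφ w 1 (-1)
  have h_nonneg : 0 ≤ ∫ x, (1 * φ x - -1 * φ (x + w)) ^ 2 ∂μ :=
    integral_nonneg fun _ => sq_nonneg _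
  linarith

end MemLp

lemma l2Increment_le_of_lipschitzWith [NormedAddCommGroup E] [BorelSpace E] {μ : Measure E}
    [IsFiniteMeasureOnCompacts μ] [μ.IsAddRightInvariant] {φ : E → ℝ} {L : NNReal}
    (hL : LipschitzWith L φ) (hs : HasCompactSupport φ) (w : E) :
    l2Increment μ φ w ≤ 2 * L ^ 2 * μ.real (tsupport φ) * ‖w‖ ^ 2 := by
  set χ : E → ℝ := (tsupport φ).indicator 1 with hχ
  have hχ_meas : MeasurableSet (tsupport φ) := (isClosed_tsupport φ).measurableSet
  have hχ_int : Integrable χ μ :=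
    (integrable_indicator_iff hχ_meas).2 (integrableOn_const hs.isCompact.measure_lt_top.ne)
  have hχ_nonneg : ∀ x, 0 ≤ χ x := indicator_nonneg fun _ _ => zero_le_one
  have h_lip : ∀ x, (φ (x + w) - φ x) ^ 2 ≤ L ^ 2 * ‖w‖ ^ 2 := fun x => by
    rw [← mul_pow, ← sq_abs]
    gcongr
    simpa [dist_eq_norm] using hL.dist_le_mul (x + w) x
  have h_le : ∀ x, (φ (x + w) - φ x) ^ 2 ≤ L ^ 2 * ‖w‖ ^ 2 * (χ (x + w) + χ x) := fun x => by
    by_cases h : x + w ∈ tsupport φ ∨ x ∈ tsupport φ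
    · refine (h_lip x).trans (le_mul_of_one_le_right (by positivity) ?_)
      rcases h with h | h
      · linarith [hχ_nonneg x, show χ (x + w) = 1 from indicator_of_mem h _]
      · linarith [hχ_nonneg (x + w), show χ x = 1 from indicator_of_mem h _]
    · rw [not_or] at h
      rw [image_eq_zero_of_notMem_tsupport h.1, image_eq_zero_of_notMem_tsupport h.2, sub_zero,
        zero_pow two_ne_zero]
      exact mul_nonneg (by positivity) (add_nonneg (hχ_nonneg _) (hχ_nonneg _))
  calc l2Increment μ φ w ≤ ∫ x, L ^ 2 * ‖w‖ ^ 2 * (χ (x + w) + χ x) ∂μ :=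
        integral_mono_of_nonneg (.of_forall fun _ => sq_nonneg _)
          (((hχ_int.comp_add_right w).add hχ_int).const_mul _) (.of_forall h_le)
    _ = 2 * L ^ 2 * μ.real (tsupport φ) * ‖w‖ ^ 2 := by
        rw [integral_const_mul, integral_add (hχ_int.comp_add_right w) hχ_int,
          integral_add_right_eq_self, hχ, integral_indicator_one hχ_meas]
        ring

section Haar

variable [NormedAddCommGroup E] [NormedSpace ℝ E] [FiniteDimensional ℝ E] [BorelSpace E]
  (μ : Measure E) [μ.IsAddHaarMeasure]

lemma l2Increment_comp_inv_smul (φ : E → ℝ) {R : ℝ} (hR : 0 ≤ R) (w : E) :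
    l2Increment μ (fun x => φ (R⁻¹ • x)) w = R ^ finrank ℝ E * l2Increment μ φ (R⁻¹ • w) := by
  simp only [l2Increment, smul_add]
  exact Measure.integral_comp_inv_smul_of_nonneg μ (fun x => (φ (x + R⁻¹ • w) - φ x) ^ 2) hR

lemma exists_contDiff_integral_sq_pos :
    ∃ φ : E → ℝ, ContDiff ℝ ∞ φ ∧ HasCompactSupport φ ∧ 0 < ∫ x, φ x ^ 2 ∂μ := by
  let b : ContDiffBump (0 : E) := ⟨1, 2, one_pos, one_lt_two⟩
  have hb0 : b 0 ^ 2 ≠ 0 := by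
    rw [b.one_of_mem_closedBall (Metric.mem_closedBall_self b.rIn_pos.le)]
    norm_num
  have hbs : HasCompactSupport fun x => b x ^ 2 :=
    b.hasCompactSupport.comp_left (g := (· ^ 2)) (zero_pow two_ne_zero)
  exact ⟨b, b.contDiff, b.hasCompactSupport,
    (b.continuous.pow 2).integral_pos_of_hasCompactSupport_nonneg_nonzero hbs
      (fun x => sq_nonneg _) hb0⟩

lemma exists_contDiff_l2Increment_le {ε : ℝ} (hε : 0 < ε) :
    ∃ φ : E → ℝ, ContDiff ℝ ∞ φ ∧ HasCompactSupport φ ∧ 0 < ∫ x, φ x ^ 2 ∂μ ∧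
      ∀ w, l2Increment μ φ w ≤ ε * (∫ x, φ x ^ 2 ∂μ) * ‖w‖ ^ 2 := by
  obtain ⟨φ, hφ, hφs, hφ_pos⟩ := exists_contDiff_integral_sq_pos μ
  obtain ⟨L, hL⟩ := hφ.lipschitzWith_of_hasCompactSupport hφs (by simp)
  obtain ⟨R, hR, hR_le⟩ : ∃ R : ℝ, 0 < R ∧
      2 * L ^ 2 * μ.real (tsupport φ) * R⁻¹ ^ 2 ≤ ε * ∫ x, φ x ^ 2 ∂μ := by
    have h_lim : Tendsto (fun R : ℝ => 2 * L ^ 2 * μ.real (tsupport φ) * R⁻¹ ^ 2) atTop (𝓝 0) := by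
      rw [show (0 : ℝ) = 2 * L ^ 2 * μ.real (tsupport φ) * 0 ^ 2 by ring]
      exact (tendsto_inv_atTop_zero.pow 2).const_mul _
    exact ((eventually_gt_atTop 0).and (h_lim.eventually_le_const (by positivity))).exists
  have h_sq : ∫ x, φ (R⁻¹ • x) ^ 2 ∂μ = R ^ finrank ℝ E * ∫ x, φ x ^ 2 ∂μ :=
    Measure.integral_comp_inv_smul_of_nonneg μ (fun x => φ x ^ 2) hR.le
  refine ⟨fun x => φ (R⁻¹ • x), by fun_prop, hφs.comp_smul (inv_ne_zero hR.ne'), ?_, fun w => ?_⟩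
  · rw [h_sq]
    positivity
  · rw [h_sq, l2Increment_comp_inv_smul μ φ hR.le]
    calc R ^ finrank ℝ E * l2Increment μ φ (R⁻¹ • w)
        ≤ R ^ finrank ℝ E * (2 * L ^ 2 * μ.real (tsupport φ) * ‖R⁻¹ • w‖ ^ 2) := by
          gcongr
          exact l2Increment_le_of_lipschitzWith hL hφs _
      _ = R ^ finrank ℝ E * (2 * L ^ 2 * μ.real (tsupport φ) * R⁻¹ ^ 2) * ‖w‖ ^ 2 := by
          rw [norm_smul, norm_inv, Real.norm_of_nonneg hR.le]
          ring
      _ ≤ R ^ finrank ℝ E * (ε * ∫ x, φ x ^ 2 ∂μ) * ‖w‖ ^ 2 := by gcongr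
      _ = ε * (R ^ finrank ℝ E * ∫ x, φ x ^ 2 ∂μ) * ‖w‖ ^ 2 := by ring

end Haar

end Increment

section Energy

variable {E : Type*} [NormedAddCommGroup E] [MeasurableSpace E]

/-- The Gagliardo energy `∫∫ (u x - u y) ^ 2 / ‖x - y‖ ^ q`, as an extended nonnegative number. -/
noncomputable def gagliardoEnergy (μ : Measure E) (q : ℝ) (u : E → ℝ) : ENNReal :=
  ∫⁻ x, ∫⁻ y, ENNReal.ofReal ((u x - u y) ^ 2 / ‖x - y‖ ^ q) ∂μ ∂μ

lemma gagliardoEnergy_eq_lintegral_l2Increment [BorelSpace E] [SecondCountableTopology E]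
    {μ : Measure E} [SFinite μ] [μ.IsAddRightInvariant] {u : E → ℝ} (hu : Measurable u)
    (hu2 : MemLp u 2 μ) (q : ℝ) :
    gagliardoEnergy μ q u = ∫⁻ z, ENNReal.ofReal (‖z‖ ^ (-q) * l2Increment μ u z) ∂μ := by
  calc gagliardoEnergy μ q u
      = ∫⁻ x, ∫⁻ z, ENNReal.ofReal (‖z‖ ^ (-q) * (u (x + z) - u x) ^ 2) ∂μ ∂μ := by
        refine lintegral_congr fun x => ?_
        rw [← lintegral_add_right_eq_self _ x]
        refine lintegral_congr fun z => ?_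
        rw [add_comm z, sub_add_cancel_left, norm_neg, rpow_neg (norm_nonneg _), sub_sq_comm,
          div_eq_inv_mul]
    _ = ∫⁻ z, ∫⁻ x, ENNReal.ofReal (‖z‖ ^ (-q) * (u (x + z) - u x) ^ 2) ∂μ ∂μ :=
        lintegral_lintegral_swap (by fun_prop)
    _ = ∫⁻ z, ENNReal.ofReal (‖z‖ ^ (-q) * l2Increment μ u z) ∂μ := by
        refine lintegral_congr fun z => ?_
        rw [l2Increment, ← integral_const_mul,
          ofReal_integral_eq_lintegral_ofReal ((integrable_sq_increment hu2 z).const_mul _)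
            (.of_forall fun x => by positivity)]

lemma gagliardoEnergy_comp_isometryEquiv {F : Type*} [NormedAddCommGroup F] [MeasurableSpace F]
    [BorelSpace E] [BorelSpace F] {μ : Measure E} {ν : Measure F} (e : E ≃ᵢ F)
    (he : MeasurePreserving e μ ν) (q : ℝ) (u : F → ℝ) :
    gagliardoEnergy μ q (u ∘ e) = gagliardoEnergy ν q u := by
  have h_emb : MeasurableEmbedding e := e.toHomeomorph.measurableEmbedding
  simp only [gagliardoEnergy, Function.comp_apply, ← dist_eq_norm, ← e.dist_eq]
  rw [← he.lintegral_comp_emb h_emb]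
  exact lintegral_congr fun x =>
    he.lintegral_comp_emb h_emb fun y => ENNReal.ofReal ((u (e x) - u y) ^ 2 / dist (e x) y ^ q)

end Energy

lemma integral_integral_le_of_lintegral_lintegral_le {X Y : Type*} [MeasurableSpace X]
    [MeasurableSpace Y] {μ : Measure X} {ν : Measure Y} {F : X → Y → ℝ} (hF : ∀ x y, 0 ≤ F x y)
    {B : ℝ} (hB : 0 ≤ B) (h : ∫⁻ x, ∫⁻ y, ENNReal.ofReal (F x y) ∂ν ∂μ ≤ ENNReal.ofReal B) :
    ∫ x, ∫ y, F x y ∂ν ∂μ ≤ B := by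
  have h_nonneg : 0 ≤ fun x => ∫ y, F x y ∂ν := fun x => integral_nonneg (hF x)
  have h_inner (x : X) :
      ENNReal.ofReal (∫ y, F x y ∂ν) ≤ ∫⁻ y, ENNReal.ofReal (F x y) ∂ν := by
    by_cases hi : Integrable (F x) ν
    · rw [ofReal_integral_eq_lintegral_ofReal hi (.of_forall (hF x))]
    · simp only [integral_undef hi, ENNReal.ofReal_zero, zero_le]
  by_cases hi : Integrable (fun x => ∫ y, F x y ∂ν) μ
  · refine (ENNReal.ofReal_le_ofReal_iff hB).1 ?_
    rw [ofReal_integral_eq_lintegral_ofReal hi (.of_forall h_nonneg)]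
    exact (lintegral_mono h_inner).trans h
  · rwa [integral_undef hi]

section Kernel

variable {E : Type*} [NormedAddCommGroup E] [NormedSpace ℝ E] [FiniteDimensional ℝ E]
  [Nontrivial E] [MeasurableSpace E] [BorelSpace E] (μ : Measure E) [μ.IsAddHaarMeasure] {α : ℝ}

lemma integrable_norm_rpow_mul_min_one_sq (hα : 0 < α) (hα2 : α < 2) :
    Integrable (fun z : E => ‖z‖ ^ (-(finrank ℝ E + α)) * min 1 (‖z‖ ^ 2)) μ := by
  rw [integrable_fun_norm_addHaar μ (f := fun y => y ^ (-(finrank ℝ E + α)) * min 1 (y ^ 2)),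
    ← Ioc_union_Ioi_eq_Ioi zero_le_one]
  have h_radial : ∀ y : ℝ, 0 < y →
      y ^ (finrank ℝ E - 1) * y ^ (-(finrank ℝ E + α)) = y ^ (-1 - α) := fun y hy => by
    rw [← rpow_natCast, ← rpow_add hy, Nat.cast_pred finrank_pos]
    ring_nf
  refine IntegrableOn.union ?_ ?_
  · have h_near : IntegrableOn (fun y : ℝ => y ^ (1 - α)) (Ioc 0 1) := by
      rw [← intervalIntegrable_iff_integrableOn_Ioc_of_le zero_le_one]
      exact intervalIntegral.intervalIntegrable_rpow' (by linarith)
    refine h_near.congr_fun (fun y hy => ?_) measurableSet_Ioc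
    simp only [min_eq_right (pow_le_one₀ hy.1.le hy.2), smul_eq_mul]
    rw [← mul_assoc, h_radial y hy.1, ← rpow_two, ← rpow_add hy.1]
    ring_nf
  · refine (integrableOn_Ioi_rpow_of_lt (a := -1 - α) (by linarith) one_pos).congr_fun
      (fun y (hy : 1 < y) => ?_) measurableSet_Ioi
    simp only [min_eq_left (one_le_pow₀ hy.le), smul_eq_mul, mul_one]
    rw [h_radial y (one_pos.trans hy)]

lemma exists_lintegral_norm_rpow_mul_min_le (hα : 0 < α) (hα2 : α < 2) {ε : ℝ} (hε : 0 < ε) :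
    ∃ δ > 0, ∫⁻ z : E, ENNReal.ofReal (‖z‖ ^ (-(finrank ℝ E + α)) * min 4 (δ * ‖z‖ ^ 2)) ∂μ
      ≤ ENNReal.ofReal ε := by
  set k : ℝ → E → ℝ := fun δ z => ‖z‖ ^ (-(finrank ℝ E + α)) * min 4 (δ * ‖z‖ ^ 2) with hk
  have h_small : ∀ᶠ δ in 𝓝[>] (0 : ℝ), 0 < δ ∧ δ ≤ 4 := Ioc_mem_nhdsGT four_pos
  have hk_nonneg : ∀ δ > 0, ∀ z, 0 ≤ k δ z := fun δ hδ z => by positivity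
  have hk_le : ∀ δ, δ ≤ 4 → ∀ z, k δ z ≤
      4 * (‖z‖ ^ (-(finrank ℝ E + α)) * min 1 (‖z‖ ^ 2)) := fun δ hδ z => by
    simp only [hk]
    rw [mul_left_comm, mul_min_of_nonneg (a := 4) _ _ zero_le_four, mul_one]
    gcongr
  have hk_meas : ∀ δ, AEStronglyMeasurable (k δ) μ := fun δ =>
    Measurable.aestronglyMeasurable (by fun_prop)
  have hk_bound := (integrable_norm_rpow_mul_min_one_sq μ hα hα2).const_mul 4
  have h_lim : Tendsto (fun δ => ∫ z, k δ z ∂μ) (𝓝[>] 0) (𝓝 0) := by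
    rw [show 𝓝 (0 : ℝ) = 𝓝 (∫ _, 0 ∂μ) by rw [integral_zero]]
    refine tendsto_integral_filter_of_dominated_convergence _ (.of_forall hk_meas) ?_ hk_bound ?_
    · filter_upwards [h_small] with δ hδ
      exact .of_forall fun z =>
        (Real.norm_of_nonneg (hk_nonneg δ hδ.1 z)).trans_le (hk_le δ hδ.2 z)
    · refine .of_forall fun z => tendsto_nhdsWithin_of_tendsto_nhds ?_
      have h_cont : Continuous fun δ => k δ z := by fun_prop
      simpa [hk] using h_cont.tendsto 0
  obtain ⟨δ, ⟨hδ, hδ4⟩, hδε⟩ := (h_small.and (h_lim.eventually_le_const hε)).exists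
  refine ⟨δ, hδ, ?_⟩
  rw [← ofReal_integral_eq_lintegral_ofReal
    (hk_bound.mono' (hk_meas δ) (.of_forall fun z =>
      (Real.norm_of_nonneg (hk_nonneg δ hδ z)).trans_le (hk_le δ hδ4 z)))
    (.of_forall (hk_nonneg δ hδ))]
  exact ENNReal.ofReal_le_ofReal hδε

end Kernel

section Slicing

lemma lintegral_rpow_mul_exp_neg_mul_Ioi {P r : ℝ} (hP : 0 < P) (hr : 0 < r) :
    ∫⁻ t in Ioi 0, ENNReal.ofReal (t ^ (P - 1) * exp (-(r * t)))
      = ENNReal.ofReal (r ^ (-P) * Gamma P) := by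
  have h := integral_rpow_mul_exp_neg_mul_Ioi hP hr
  have h_int : IntegrableOn (fun t => t ^ (P - 1) * exp (-(r * t))) (Ioi 0) :=
    Integrable.of_integral_ne_zero (by rw [h]; positivity [Gamma_pos_of_pos hP])
  rw [← ofReal_integral_eq_lintegral_ofReal h_int
    (ae_restrict_of_forall_mem measurableSet_Ioi fun t (ht : 0 < t) => by positivity), h, one_div,
    inv_rpow hr.le, rpow_neg hr.le]

variable {V : Type*} [NormedAddCommGroup V] [InnerProductSpace ℝ V] [FiniteDimensional ℝ V]
  [MeasurableSpace V] [BorelSpace V]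

lemma lintegral_exp_neg_mul_norm_sq {t : ℝ} (ht : 0 < t) :
    ∫⁻ v : V, ENNReal.ofReal (exp (-t * ‖v‖ ^ 2))
      = ENNReal.ofReal ((π / t) ^ (finrank ℝ V / 2 : ℝ)) := by
  have h := GaussianFourier.integral_rexp_neg_mul_sq_norm (V := V) ht
  rw [← ofReal_integral_eq_lintegral_ofReal
    (Integrable.of_integral_ne_zero (by rw [h]; positivity))
    (.of_forall fun _ => (exp_pos _).le), h]

/- Writing the power as a Gamma integral turns the fibre integral into a Gaussian one. -/
lemma lintegral_norm_sq_add_rpow {P a : ℝ} (hP : finrank ℝ V / 2 < P) (ha : 0 < a) :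
    ∫⁻ v : V, ENNReal.ofReal ((‖v‖ ^ 2 + a) ^ (-P))
      = ENNReal.ofReal (π ^ (finrank ℝ V / 2 : ℝ) * Gamma (P - finrank ℝ V / 2) / Gamma P
          * a ^ (-(P - finrank ℝ V / 2))) := by
  set m : ℝ := finrank ℝ V / 2 with hm
  have hP_pos : 0 < P := lt_of_le_of_lt (by positivity) hP
  have := Gamma_pos_of_pos hP_pos
  have h_gauss : ∀ t ∈ Ioi (0 : ℝ), ∫⁻ v : V,
      ENNReal.ofReal (t ^ (P - 1) * exp (-((‖v‖ ^ 2 + a) * t)))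
        = ENNReal.ofReal (π ^ m) * ENNReal.ofReal (t ^ (P - m - 1) * exp (-(a * t))) := by
    intro t (ht : 0 < t)
    have h_split (v : V) : t ^ (P - 1) * exp (-((‖v‖ ^ 2 + a) * t))
        = t ^ (P - 1) * exp (-(a * t)) * exp (-t * ‖v‖ ^ 2) := by
      rw [mul_assoc, ← exp_add]
      ring_nf
    simp_rw [h_split, ENNReal.ofReal_mul (show 0 ≤ t ^ (P - 1) * exp (-(a * t)) by positivity)]
    rw [lintegral_const_mul' _ _ ENNReal.ofReal_ne_top, lintegral_exp_neg_mul_norm_sq ht,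
      ← ENNReal.ofReal_mul (by positivity), ← ENNReal.ofReal_mul (by positivity),
      div_rpow pi_pos.le ht.le, show P - m - 1 = P - 1 - m by ring, rpow_sub ht (P - 1) m]
    congr 1
    rw [← hm]
    field_simp
  calc ∫⁻ v : V, ENNReal.ofReal ((‖v‖ ^ 2 + a) ^ (-P))
      = ∫⁻ v : V, ENNReal.ofReal (Gamma P)⁻¹ *
          ∫⁻ t in Ioi 0, ENNReal.ofReal (t ^ (P - 1) * exp (-((‖v‖ ^ 2 + a) * t))) := by
        refine lintegral_congr fun v => ?_
        rw [lintegral_rpow_mul_exp_neg_mul_Ioi hP_pos (by positivity),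
          ← ENNReal.ofReal_mul (by positivity)]
        congr 1
        field_simp
    _ = ENNReal.ofReal (Gamma P)⁻¹ * ∫⁻ t in Ioi 0,
          ENNReal.ofReal (π ^ m) * ENNReal.ofReal (t ^ (P - m - 1) * exp (-(a * t))) := by
        rw [lintegral_const_mul' _ _ ENNReal.ofReal_ne_top, lintegral_lintegral_swap (by fun_prop),
          setLIntegral_congr_fun measurableSet_Ioi h_gauss]
    _ = ENNReal.ofReal (π ^ m * Gamma (P - m) / Gamma P * a ^ (-(P - m))) := by
        rw [lintegral_const_mul' _ _ ENNReal.ofReal_ne_top,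
          lintegral_rpow_mul_exp_neg_mul_Ioi (sub_pos.2 hP) ha,
          ← ENNReal.ofReal_mul (by positivity), ← ENNReal.ofReal_mul (by positivity)]
        congr 1
        field_simp

lemma lintegral_norm_rpow_mul_comp_snd {q : ℝ} (hq : finrank ℝ V < q) {M : ℝ → ℝ}
    (hM : Measurable M) :
    ∫⁻ z : WithLp 2 (V × ℝ), ENNReal.ofReal (‖z‖ ^ (-q) * M z.snd)
      = ENNReal.ofReal
          (π ^ (finrank ℝ V / 2 : ℝ) * Gamma ((q - finrank ℝ V) / 2) / Gamma (q / 2))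
        * ∫⁻ h, ENNReal.ofReal (|h| ^ (-(q - finrank ℝ V)) * M h) := by
  have h_norm (v : V) (h : ℝ) :
      ‖WithLp.toLp 2 (v, h)‖ ^ (-q) = (‖v‖ ^ 2 + h ^ 2) ^ (-(q / 2)) := by
    have h_sq : ‖WithLp.toLp 2 (v, h)‖ ^ 2 = ‖v‖ ^ 2 + h ^ 2 := by
      simp [WithLp.prod_norm_sq_eq_of_L2]
    rw [← h_sq, ← rpow_two, ← rpow_mul (norm_nonneg _)]
    ring_nf
  have h_fiber : ∀ h : ℝ, h ≠ 0 → ∫⁻ v : V, ENNReal.ofReal ((‖v‖ ^ 2 + h ^ 2) ^ (-(q / 2)) * M h)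
      = ENNReal.ofReal (π ^ (finrank ℝ V / 2 : ℝ) * Gamma ((q - finrank ℝ V) / 2) / Gamma (q / 2))
        * ENNReal.ofReal (|h| ^ (-(q - finrank ℝ V)) * M h) := fun h hh => by
    have hq_pos : 0 < q := lt_of_le_of_lt (by positivity) hq
    have := Gamma_pos_of_pos (half_pos hq_pos)
    have := Gamma_pos_of_pos (half_pos (sub_pos.2 hq))
    have h_nonneg (v : V) : 0 ≤ (‖v‖ ^ 2 + h ^ 2) ^ (-(q / 2)) := by positivity
    simp_rw [ENNReal.ofReal_mul (h_nonneg _)]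
    rw [lintegral_mul_const' _ _ ENNReal.ofReal_ne_top,
      lintegral_norm_sq_add_rpow (by linarith) (by positivity), ← sub_div,
      ← ENNReal.ofReal_mul (by positivity), ← ENNReal.ofReal_mul (by positivity), ← sq_abs h,
      ← rpow_two, ← rpow_mul (abs_nonneg h), mul_assoc _ (|h| ^ _)]
    ring_nf
  rw [← (WithLp.volume_preserving_toLp V ℝ).lintegral_comp_emb
    (MeasurableEquiv.toLp 2 (V × ℝ)).measurableEmbedding, Measure.volume_eq_prod,
    lintegral_prod_symm' _ (by fun_prop), ← lintegral_const_mul' _ _ ENNReal.ofReal_ne_top]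
  refine lintegral_congr_ae ?_
  filter_upwards [Measure.ae_ne volume (0 : ℝ)] with h hh
  simp only [h_norm]
  exact h_fiber h hh

end Slicing

section Tensor

/-- The tensor product `φ ⊗ f`, as a function on the Hilbert sum of `V` and `W`. -/
def tensor {V W : Type*} (φ : V → ℝ) (f : W → ℝ) (p : WithLp 2 (V × W)) : ℝ :=
  φ p.fst * f p.snd

lemma tsupport_tensor_subset {V W : Type*} [TopologicalSpace V] [TopologicalSpace W] (φ : V → ℝ)
    (f : W → ℝ) : tsupport (tensor φ f) ⊆ WithLp.ofLp ⁻¹' (tsupport φ ×ˢ tsupport f) := by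
  refine closure_minimal (fun p (hp : φ p.fst * f p.snd ≠ 0) => ?_)
    (((isClosed_tsupport φ).prod (isClosed_tsupport f)).preimage
      (WithLp.prod_continuous_ofLp 2 V W))
  exact ⟨subset_tsupport φ (left_ne_zero_of_mul hp), subset_tsupport f (right_ne_zero_of_mul hp)⟩

lemma hasCompactSupport_tensor {V W : Type*} [TopologicalSpace V] [TopologicalSpace W]
    {φ : V → ℝ} {f : W → ℝ} (hφ : HasCompactSupport φ) (hf : HasCompactSupport f) :
    HasCompactSupport (tensor φ f) :=
  ((WithLp.homeomorphProd 2 V W).isCompact_preimage.2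
    (hφ.isCompact.prod hf.isCompact)).of_isClosed_subset (isClosed_tsupport _)
    (tsupport_tensor_subset φ f)

lemma contDiff_tensor {V W : Type*} [NormedAddCommGroup V] [NormedSpace ℝ V]
    [NormedAddCommGroup W] [NormedSpace ℝ W] {φ : V → ℝ} {f : W → ℝ} {n : WithTop ℕ∞}
    (hφ : ContDiff ℝ n φ) (hf : ContDiff ℝ n f) : ContDiff ℝ n (tensor φ f) :=
  have h_ofLp : ContDiff ℝ n (WithLp.ofLp : WithLp 2 (V × W) → V × W) :=
    (WithLp.prodContinuousLinearEquiv 2 ℝ V W).contDiff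
  (hφ.comp h_ofLp.fst).mul (hf.comp h_ofLp.snd)

variable {V W : Type*} [NormedAddCommGroup V] [InnerProductSpace ℝ V] [FiniteDimensional ℝ V]
  [MeasurableSpace V] [BorelSpace V] [NormedAddCommGroup W] [InnerProductSpace ℝ W]
  [FiniteDimensional ℝ W] [MeasurableSpace W] [BorelSpace W]

lemma setIntegral_tensor (φ : V → ℝ) (f : W → ℝ) (s : Set W) :
    ∫ p in {p : WithLp 2 (V × W) | p.snd ∈ s}, tensor φ f p = (∫ x, φ x) * ∫ y in s, f y := by
  rw [← setIntegral_univ (f := φ), ← setIntegral_prod_mul, ← Measure.volume_eq_prod,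
    ← (WithLp.volume_preserving_toLp V W).setIntegral_preimage_emb
      (MeasurableEquiv.toLp 2 (V × W)).measurableEmbedding]
  simp only [univ_prod]
  rfl

lemma integral_tensor (φ : V → ℝ) (f : W → ℝ) :
    ∫ p, tensor φ f p = (∫ x, φ x) * ∫ y, f y := by
  simpa using setIntegral_tensor φ f univ

lemma l2Increment_tensor {φ : V → ℝ} {f : W → ℝ} (hφ : MemLp φ 2) (hf : MemLp f 2)
    (hφf : MemLp (tensor φ f) 2) (z : WithLp 2 (V × W)) :
    l2Increment volume (tensor φ f) z
      = (∫ x, φ x ^ 2) * l2Increment volume f z.snd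
        + (∫ y, f y ^ 2) * l2Increment volume φ z.fst
        - l2Increment volume φ z.fst * l2Increment volume f z.snd / 2 := by
  have h_sq : ∫ p, tensor φ f p ^ 2 = (∫ x, φ x ^ 2) * ∫ y, f y ^ 2 := by
    rw [← integral_tensor]
    simp only [tensor, mul_pow]
  have h_mul : ∫ p, tensor φ f p * tensor φ f (p + z)
      = (∫ x, φ x * φ (x + z.fst)) * ∫ y, f y * f (y + z.snd) := by
    rw [← integral_tensor]
    simp only [tensor, WithLp.add_fst, WithLp.add_snd, mul_mul_mul_comm]
  rw [integral_mul_translate hφf, integral_mul_translate hφ, integral_mul_translate hf, h_sq]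
    at h_mul
  linarith

end Tensor

section SharpConstant

section Beta

variable {a b : ℝ}

lemma integrableOn_rpow_mul_one_sub_rpow (ha : 0 < a) (hb : 0 < b) :
    IntegrableOn (fun x : ℝ => x ^ (a - 1) * (1 - x) ^ (b - 1)) (Ioo 0 1) := by
  have h_pdf := ProbabilityTheory.lintegral_betaPDF_eq_one ha hb
  have h_beta := ProbabilityTheory.beta_pos ha hb
  rw [ProbabilityTheory.lintegral_betaPDF] at h_pdf
  have h_int : IntegrableOn (fun x : ℝ =>
      1 / ProbabilityTheory.beta a b * x ^ (a - 1) * (1 - x) ^ (b - 1)) (Ioo 0 1) := by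
    refine (lintegral_ofReal_ne_top_iff_integrable (by fun_prop) ?_).1 (h_pdf ▸ ENNReal.one_ne_top)
    refine ae_restrict_of_forall_mem measurableSet_Ioo fun x hx => ?_
    have := rpow_nonneg hx.1.le (a - 1)
    have := rpow_nonneg (sub_nonneg.2 hx.2.le) (b - 1)
    positivity
  refine (h_int.const_mul (ProbabilityTheory.beta a b)).congr (.of_forall fun x => ?_)
  field_simp

lemma setIntegral_rpow_mul_one_sub_rpow (ha : 0 < a) (hb : 0 < b) :
    ∫ x in Ioo (0 : ℝ) 1, x ^ (a - 1) * (1 - x) ^ (b - 1) = ProbabilityTheory.beta a b := by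
  have h_pdf := ProbabilityTheory.lintegral_betaPDF_eq_one ha hb
  have h_beta := ProbabilityTheory.beta_pos ha hb
  rw [ProbabilityTheory.lintegral_betaPDF] at h_pdf
  simp only [mul_assoc] at h_pdf
  rw [← ofReal_integral_eq_lintegral_ofReal
      ((integrableOn_rpow_mul_one_sub_rpow ha hb).const_mul _), integral_const_mul,
    ENNReal.ofReal_eq_one, one_div_mul_eq_div, div_eq_one_iff_eq h_beta.ne'] at h_pdf
  · exact h_pdf
  · refine ae_restrict_of_forall_mem measurableSet_Ioo fun x hx => ?_
    have := rpow_nonneg hx.1.le (a - 1)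
    have := rpow_nonneg (sub_nonneg.2 hx.2.le) (b - 1)
    positivity

end Beta

section Bounds

variable {r : ℝ}

lemma rpow_neg_sub_one_le (hr : r ∈ Ioo (0 : ℝ) 1) {p : ℝ} (hp : p ≤ 1) :
    r ^ (-p) - 1 ≤ r ^ (-p) * (1 - r) := by
  have h : r ^ (-p) * r ≤ 1 := by
    rw [← rpow_add_one hr.1.ne']
    exact rpow_le_one hr.1.le hr.2.le (by linarith)
  linarith

lemma abs_one_sub_rpow_le (hr : r ∈ Ioo (0 : ℝ) 1) {p : ℝ} (hp : |p| ≤ 1) :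
    |1 - r ^ p| ≤ r ^ (-|p|) * (1 - r) := by
  rcases le_total 0 p with h0 | h0
  · rw [abs_of_nonneg h0] at hp ⊢
    rw [abs_of_nonneg (sub_nonneg.2 (rpow_le_one hr.1.le hr.2.le h0))]
    calc 1 - r ^ p ≤ 1 - r := by linarith [self_le_rpow_of_le_one hr.1.le hr.2.le hp]
      _ ≤ r ^ (-p) * (1 - r) := le_mul_of_one_le_left (sub_nonneg.2 hr.2.le)
          (one_le_rpow_of_pos_of_le_one_of_nonpos hr.1 hr.2.le (neg_nonpos.2 h0))
  · rw [abs_of_nonpos h0] at hp ⊢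
    rw [abs_sub_comm, abs_of_nonneg
      (sub_nonneg.2 (one_le_rpow_of_pos_of_le_one_of_nonpos hr.1 hr.2.le h0))]
    simpa using rpow_neg_sub_one_le hr hp

lemma log_sq_le_rpow_mul (hr : r ∈ Ioo (0 : ℝ) 1) :
    log r ^ 2 ≤ 16 * (r ^ (-1 / 2 : ℝ) * (1 - r) ^ 2) := by
  have h_log : -log r ≤ 4 * (r ^ (-(1 / 4 : ℝ)) * (1 - r)) := by
    have h := log_le_sub_one_of_pos (rpow_pos_of_pos hr.1 (-(1 / 4)))
    rw [log_rpow hr.1] at h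
    linarith [rpow_neg_sub_one_le hr (by norm_num : (1 / 4 : ℝ) ≤ 1)]
  calc log r ^ 2 = (-log r) ^ 2 := (neg_sq _).symm
    _ ≤ (4 * (r ^ (-(1 / 4 : ℝ)) * (1 - r))) ^ 2 :=
        pow_le_pow_left₀ (neg_nonneg.2 (log_nonpos hr.1.le hr.2.le)) h_log 2
    _ = 16 * (r ^ (-1 / 2 : ℝ) * (1 - r) ^ 2) := by
        rw [mul_pow, mul_pow, ← rpow_mul_natCast hr.1.le]
        norm_num

end Bounds

section Primitive

/-- An explicit primitive on `(0, 1)` of the difference between the one-dimensional Hardy integrand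
`(1 - x ^ ((α - 1) / 2)) ^ 2 * (1 - x) ^ (-1 - α)` and a multiple of a Beta integrand. -/
noncomputable def hardyPrimitive (α x : ℝ) : ℝ :=
  (1 - x) ^ (-α) / α * (1 - (3 - x) * x ^ ((1 + α) / 2) + x ^ α)

variable {α : ℝ}

lemma hasDerivAt_hardyPrimitive (hα : α ≠ 0) {x : ℝ} (hx : x ∈ Ioo (0 : ℝ) 1) :
    HasDerivAt (hardyPrimitive α) ((1 - x ^ ((α - 1) / 2)) ^ 2 * (1 - x) ^ (-1 - α)
      - (3 - α) / (2 * α) * (x ^ ((1 + α) / 2 - 1) * (1 - x) ^ (2 - α - 1))) x := by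
  have hx0 : x ≠ 0 := hx.1.ne'
  have hy0 : 1 - x ≠ 0 := (sub_pos.2 hx.2).ne'
  have d_sub : HasDerivAt (fun x : ℝ => 1 - x) (-1) x := (hasDerivAt_id x).const_sub 1
  have h := ((d_sub.rpow_const (p := -α) (.inl hy0)).div_const α).mul
    (((((hasDerivAt_id x).const_sub 3).mul
      (hasDerivAt_rpow_const (p := (1 + α) / 2) (.inl hx0))).const_sub 1).add
      (hasDerivAt_rpow_const (p := α) (.inl hx0)))
  refine h.congr_deriv ?_
  have e1 : (1 - x) ^ (-1 - α) = (1 - x) ^ (-α) / (1 - x) := by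
    rw [show -1 - α = -α - 1 by ring, rpow_sub_one hy0]
  have e2 : (1 - x) ^ (2 - α - 1) = (1 - x) ^ (-α) * (1 - x) := by
    rw [show 2 - α - 1 = -α + 1 by ring, rpow_add_one hy0]
  have e3 : x ^ ((1 + α) / 2 - 1) = x ^ ((α - 1) / 2) := by ring_nf
  have e4 : x ^ ((1 + α) / 2) = x ^ ((α - 1) / 2) * x := by
    rw [← rpow_add_one hx0]; ring_nf
  have e5 : x ^ α = (x ^ ((α - 1) / 2)) ^ 2 * x := by
    rw [← rpow_mul_natCast hx.1.le, ← rpow_add_one hx0]; ring_nf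
  simp only [Pi.add_apply, Pi.mul_apply, id, rpow_sub_one hx0 α, rpow_sub_one hy0 (-α), e1,
    e2, e3, e4, e5]
  field_simp
  ring

lemma tendsto_hardyPrimitive_zero (hα : 0 < α) :
    Tendsto (hardyPrimitive α) (𝓝[>] 0) (𝓝 (1 / α)) := by
  have h : ContinuousAt (hardyPrimitive α) 0 := by
    unfold hardyPrimitive
    refine ((ContinuousAt.rpow_const (by fun_prop) (.inl (by norm_num))).div_const α).mul ?_
    exact (continuousAt_const.sub ((continuousAt_const.sub continuousAt_id).mul
      (continuousAt_rpow_const _ _ (.inr (by linarith))))).add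
      (continuousAt_rpow_const _ _ (.inr hα.le))
  have h0 : hardyPrimitive α 0 = 1 / α := by
    rw [hardyPrimitive, zero_rpow hα.ne', zero_rpow (by linarith : (1 + α) / 2 ≠ 0)]
    norm_num
  exact h0 ▸ h.tendsto.mono_left nhdsWithin_le_nhds

-- The bracket in `hardyPrimitive` vanishes to second order at `1`.
lemma tendsto_hardyPrimitive_one (hα2 : α < 2) :
    Tendsto (hardyPrimitive α) (𝓝[<] 1) (𝓝 0) := by
  have h_id : Tendsto (fun x : ℝ => x) (𝓝[<] 1) (𝓝 1) := nhdsWithin_le_nhds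
  have h_pow : Tendsto (fun x : ℝ => (1 - x) ^ (2 - α)) (𝓝[<] 1) (𝓝 0) := by
    have h := (h_id.const_sub 1).rpow_const (p := 2 - α) (.inr (by linarith))
    rwa [sub_self, zero_rpow (by linarith)] at h
  have h_slope : Tendsto (fun x : ℝ => (x ^ ((α - 1) / 2) - 1) / (x - 1)) (𝓝[<] 1)
      (𝓝 ((α - 1) / 2)) := by
    have h := (hasDerivAt_rpow_const (x := (1 : ℝ)) (p := (α - 1) / 2) (.inl one_ne_zero))
    rw [hasDerivAt_iff_tendsto_slope] at h
    simp only [one_rpow, mul_one, slope_fun_def_field] at h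
    exact h.mono_left (nhdsWithin_mono 1 fun x hx => ne_of_lt hx)
  have h := (h_pow.div_const α).mul
    (((h_id.mul h_slope).const_add 1).add (h_id.mul (h_slope.pow 2)))
  rw [zero_div, zero_mul] at h
  refine h.congr' ?_
  filter_upwards [Ioo_mem_nhdsLT one_pos] with x hx
  have hy0 : 0 < 1 - x := sub_pos.2 hx.2
  have hy1 : x - 1 ≠ 0 := (sub_neg.2 hx.2).ne
  have e1 : x ^ ((1 + α) / 2) = x ^ ((α - 1) / 2) * x := by
    rw [← rpow_add_one hx.1.ne']; ring_nf
  have e2 : x ^ α = (x ^ ((α - 1) / 2)) ^ 2 * x := by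
    rw [← rpow_mul_natCast hx.1.le, ← rpow_add_one hx.1.ne']; ring_nf
  rw [hardyPrimitive, e1, e2, show 2 - α = -α + 2 by ring, rpow_add hy0, rpow_two]
  field_simp
  ring

lemma integrableOn_one_sub_rpow_sq_mul (hα : 0 < α) (hα2 : α < 2) :
    IntegrableOn (fun x : ℝ => (1 - x ^ ((α - 1) / 2)) ^ 2 * (1 - x) ^ (-1 - α)) (Ioo 0 1) := by
  have h_abs : |α - 1| < 1 := abs_lt.2 ⟨by linarith, by linarith⟩
  refine (integrableOn_rpow_mul_one_sub_rpow (a := 1 - |α - 1|) (b := 2 - α) (by linarith)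
    (by linarith)).mono' (by fun_prop) (ae_restrict_of_forall_mem measurableSet_Ioo fun x hx => ?_)
  have hy0 : 0 < 1 - x := sub_pos.2 hx.2
  have h_half : |(α - 1) / 2| = |α - 1| / 2 := by rw [abs_div, abs_two]
  rw [norm_of_nonneg (by positivity)]
  calc (1 - x ^ ((α - 1) / 2)) ^ 2 * (1 - x) ^ (-1 - α)
      ≤ (x ^ (-|(α - 1) / 2|) * (1 - x)) ^ 2 * (1 - x) ^ (-1 - α) := by
        gcongr ?_ * _
        exact sq_le_sq' (abs_le.1 (abs_one_sub_rpow_le hx (by linarith))).1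
          (abs_le.1 (abs_one_sub_rpow_le hx (by linarith))).2
    _ = x ^ (1 - |α - 1| - 1) * (1 - x) ^ (2 - α - 1) := by
        rw [mul_pow, h_half, ← rpow_mul_natCast hx.1.le, mul_assoc, ← rpow_natCast (1 - x) 2,
          ← rpow_add hy0]
        push_cast
        ring_nf

lemma one_div_add_setIntegral_one_sub_rpow_sq_mul (hα : 0 < α) (hα2 : α < 2) :
    1 / α + ∫ x in Ioo (0 : ℝ) 1, (1 - x ^ ((α - 1) / 2)) ^ 2 * (1 - x) ^ (-1 - α)
      = (3 - α) / (2 * α) * ProbabilityTheory.beta ((1 + α) / 2) (2 - α) := by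
  have h_int := integrableOn_one_sub_rpow_sq_mul hα hα2
  have h_beta := (integrableOn_rpow_mul_one_sub_rpow (a := (1 + α) / 2) (b := 2 - α) (by linarith)
    (by linarith)).const_mul ((3 - α) / (2 * α))
  have h_ftc := intervalIntegral.integral_eq_sub_of_hasDerivAt_of_tendsto zero_lt_one
    (fun x hx => hasDerivAt_hardyPrimitive hα.ne' hx)
    ((intervalIntegrable_iff_integrableOn_Ioo_of_le zero_le_one).2 (h_int.sub h_beta))
    (tendsto_hardyPrimitive_zero hα) (tendsto_hardyPrimitive_one hα2)
  rw [intervalIntegral.integral_of_le zero_le_one, integral_Ioc_eq_integral_Ioo,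
    integral_sub h_int h_beta, integral_const_mul,
    setIntegral_rpow_mul_one_sub_rpow (by linarith) (by linarith)] at h_ftc
  linarith

end Primitive

section Gamma

variable {α : ℝ}

lemma Gamma_neg_of_mem_Ioo {s : ℝ} (hs : s ∈ Ioo (-1 : ℝ) 0) : Gamma s < 0 := by
  have h_pos : 0 < s * Gamma s := by
    rw [← Gamma_add_one hs.2.ne]
    exact Gamma_pos_of_pos (by linarith [hs.1])
  exact neg_of_mul_pos_right h_pos hs.2.le

lemma fracLapConst_pos (d : ℕ) (hα : 0 < α) (hα2 : α < 2) : 0 < fracLapConst d α := by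
  have : 0 < Gamma ((d + α) / 2) := Gamma_pos_of_pos (by positivity)
  have h_den : 0 < |Gamma (-α / 2)| :=
    abs_pos_of_neg (Gamma_neg_of_mem_Ioo ⟨by linarith, by linarith⟩)
  unfold fracLapConst
  positivity

lemma beta_eq_Gamma_sq_div_fracLapConst (hα : 0 < α) (hα2 : α < 2) :
    (3 - α) / (2 * α) * ProbabilityTheory.beta ((1 + α) / 2) (2 - α)
      = Gamma ((1 + α) / 2) ^ 2 / π / fracLapConst 1 α := by
  have h_neg : Gamma (-α / 2) < 0 := Gamma_neg_of_mem_Ioo ⟨by linarith, by linarith⟩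
  have h_pos : 0 < Gamma ((3 - α) / 2) := Gamma_pos_of_pos (by linarith)
  have : 0 < Gamma ((1 + α) / 2) := Gamma_pos_of_pos (by linarith)
  have h_sum : Gamma ((1 + α) / 2 + (2 - α)) = (3 - α) / 2 * Gamma ((3 - α) / 2) := by
    rw [← Gamma_add_one (by linarith)]; ring_nf
  have h_rec : Gamma (1 - α / 2) = -α / 2 * Gamma (-α / 2) := by
    rw [← Gamma_add_one (by linarith)]; ring_nf
  have h_dup : -α / 2 * Gamma (-α / 2) * Gamma ((3 - α) / 2)
      = Gamma (2 - α) * 2 ^ (α - 1) * √π := by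
    have h := Gamma_mul_Gamma_add_half (1 - α / 2)
    rwa [h_rec, show 1 - α / 2 + 1 / 2 = (3 - α) / 2 by ring,
      show 2 * (1 - α / 2) = 2 - α by ring, show 1 - (2 - α) = α - 1 by ring] at h
  have h_dup' : Gamma (2 - α) = -α * Gamma (-α / 2) * Gamma ((3 - α) / 2) / (2 ^ α * √π) := by
    rw [rpow_sub_one two_ne_zero] at h_dup
    rw [eq_div_iff (by positivity)]
    linarith
  have h3 : 3 - α ≠ 0 := by linarith
  rw [ProbabilityTheory.beta, fracLapConst, h_sum, h_dup', abs_of_neg h_neg,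
    rpow_neg zero_le_two, Nat.cast_one, ← sqrt_eq_rpow]
  field_simp
  rw [sq_sqrt pi_nonneg]

lemma pi_rpow_mul_Gamma_div_Gamma (n : ℕ) {α : ℝ} (hα : 0 < α) (hα2 : α < 2) :
    π ^ ((n : ℝ) / 2) * Gamma ((1 + α) / 2) / Gamma ((n + 1 + α) / 2)
      = fracLapConst 1 α / fracLapConst (n + 1) α := by
  have h_abs : |Gamma (-(α / 2))| ≠ 0 :=
    abs_ne_zero.2 (Gamma_neg_of_mem_Ioo ⟨by linarith, by linarith⟩).ne
  have : 0 < Gamma ((n + 1 + α) / 2) := Gamma_pos_of_pos (by positivity)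
  simp only [fracLapConst, Nat.cast_add, Nat.cast_one, add_div (n : ℝ) 1 2, rpow_add pi_pos]
  field_simp

end Gamma

end SharpConstant

section EmdenFowler

/-- The function on `(0, ∞)` with profile `g` in the logarithmic (Emden–Fowler) variable, extended
by zero to `ℝ`. The power of `s` makes `g ↦ emdenFowler α g` an isometry from `L²(ℝ)` to
`L²((0, ∞), s ^ (-α) ds)`. -/
noncomputable def emdenFowler (α : ℝ) (g : ℝ → ℝ) (s : ℝ) : ℝ :=
  if 0 < s then s ^ ((α - 1) / 2) * g (log s) else 0

variable {α : ℝ} {g : ℝ → ℝ}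

lemma emdenFowler_of_nonpos {s : ℝ} (hs : s ≤ 0) : emdenFowler α g s = 0 :=
  if_neg hs.not_gt

lemma emdenFowler_exp (α : ℝ) (g : ℝ → ℝ) (a : ℝ) :
    emdenFowler α g (exp a) = exp ((α - 1) / 2 * a) * g a := by
  rw [emdenFowler, if_pos (exp_pos a), log_exp, ← exp_mul, mul_comm a]

lemma measurable_emdenFowler (hg : Measurable g) : Measurable (emdenFowler α g) :=
  Measurable.ite measurableSet_Ioi (by fun_prop) measurable_const

lemma tsupport_emdenFowler_subset_image_exp (hg : HasCompactSupport g) :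
    tsupport (emdenFowler α g) ⊆ exp '' tsupport g := by
  refine closure_minimal (fun s hs => ?_) (hg.isCompact.image continuous_exp).isClosed
  have hs0 : 0 < s := not_le.1 fun h => hs (emdenFowler_of_nonpos h)
  refine ⟨log s, subset_tsupport g fun h => hs ?_, exp_log hs0⟩
  rw [emdenFowler, if_pos hs0, h, mul_zero]

lemma hasCompactSupport_emdenFowler (hg : HasCompactSupport g) :
    HasCompactSupport (emdenFowler α g) :=
  (hg.isCompact.image continuous_exp).of_isClosed_subset (isClosed_tsupport _)
    (tsupport_emdenFowler_subset_image_exp hg)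

lemma tsupport_emdenFowler_subset_Ioi (hg : HasCompactSupport g) :
    tsupport (emdenFowler α g) ⊆ Ioi 0 :=
  (tsupport_emdenFowler_subset_image_exp hg).trans <|
    (image_subset_range exp _).trans range_exp.subset

lemma contDiff_emdenFowler {n : WithTop ℕ∞} (hg : ContDiff ℝ n g) (hgs : HasCompactSupport g) :
    ContDiff ℝ n (emdenFowler α g) := by
  rw [contDiff_iff_contDiffAt]
  intro s
  by_cases hs : 0 < s
  · have h : ContDiffAt ℝ n (fun s => s ^ ((α - 1) / 2) * g (log s)) s :=
      (contDiffAt_rpow_const_of_ne hs.ne').mul (hg.contDiffAt.comp s (contDiffAt_log.2 hs.ne'))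
    exact h.congr_of_eventuallyEq ((eventually_gt_nhds hs).mono fun x hx => if_pos hx)
  · have h : s ∉ tsupport (emdenFowler α g) := fun h => hs (tsupport_emdenFowler_subset_Ioi hgs h)
    exact contDiffAt_const.congr_of_eventuallyEq (notMem_tsupport_iff_eventuallyEq.1 h)

lemma lintegral_Ioi_eq_lintegral_exp (Ψ : ℝ → ENNReal) :
    ∫⁻ s in Ioi 0, Ψ s = ∫⁻ a, ENNReal.ofReal (exp a) * Ψ (exp a) := by
  have h_image : exp '' univ = Ioi 0 := by rw [image_univ, range_exp]
  rw [← h_image, lintegral_image_eq_lintegral_abs_deriv_mul MeasurableSet.univ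
    (fun x _ => (hasDerivAt_exp x).hasDerivWithinAt) exp_injective.injOn, setLIntegral_univ]
  simp only [abs_exp]

lemma lintegral_Ioi_rpow_mul_sq_of_exp {F G : ℝ → ℝ}
    (hFG : ∀ a, F (exp a) = exp ((α - 1) / 2 * a) * G a) :
    ∫⁻ s in Ioi 0, ENNReal.ofReal (s ^ (-α) * F s ^ 2) = ∫⁻ a, ENNReal.ofReal (G a ^ 2) := by
  rw [lintegral_Ioi_eq_lintegral_exp]
  refine lintegral_congr fun a => ?_
  have h_exp : exp a * exp (a * -α) * exp ((2 : ℕ) * ((α - 1) / 2 * a)) = 1 := by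
    rw [← exp_add, ← exp_add, exp_eq_one_iff]
    push_cast
    ring
  rw [← ENNReal.ofReal_mul (exp_pos a).le, hFG, ← exp_mul, mul_pow, ← exp_nat_mul, ← mul_assoc,
    ← mul_assoc, h_exp, one_mul]

lemma setIntegral_emdenFowler_sq (α : ℝ) (hg : Measurable g) :
    ∫ s in Ioi 0, emdenFowler α g s ^ 2 * s ^ (-α) = ∫ a, g a ^ 2 := by
  have hf : Measurable (emdenFowler α g) := measurable_emdenFowler hg
  rw [integral_eq_lintegral_of_nonneg_ae (.of_forall fun a => sq_nonneg (g a)) (by fun_prop),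
    integral_eq_lintegral_of_nonneg_ae
      (ae_restrict_of_forall_mem measurableSet_Ioi fun s (hs : 0 < s) => by positivity)
      (by fun_prop)]
  simp only [mul_comm (emdenFowler α g _ ^ 2)]
  rw [lintegral_Ioi_rpow_mul_sq_of_exp (emdenFowler_exp α g)]

lemma lintegral_emdenFowler_dilation_of_nonpos (hg : MemLp g 2 volume) {r : ℝ} (hr : r ≤ 0) :
    ∫⁻ s in Ioi 0,
        ENNReal.ofReal (s ^ (-α) * (emdenFowler α g s - emdenFowler α g (s * r)) ^ 2)
      = ENNReal.ofReal (∫ a, g a ^ 2) := by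
  rw [ofReal_integral_eq_lintegral_ofReal hg.integrable_sq (.of_forall fun a => sq_nonneg _)]
  refine lintegral_Ioi_rpow_mul_sq_of_exp fun a => ?_
  rw [emdenFowler_exp, emdenFowler_of_nonpos (mul_nonpos_of_nonneg_of_nonpos (exp_pos a).le hr),
    sub_zero]

lemma lintegral_emdenFowler_dilation_of_pos (hg : MemLp g 2 volume) {r : ℝ} (hr : 0 < r) :
    ∫⁻ s in Ioi 0,
        ENNReal.ofReal (s ^ (-α) * (emdenFowler α g s - emdenFowler α g (s * r)) ^ 2)
      = ENNReal.ofReal ((1 - r ^ ((α - 1) / 2)) ^ 2 * ∫ a, g a ^ 2)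
        + ENNReal.ofReal (r ^ ((α - 1) / 2) * l2Increment volume g (log r)) := by
  have h_nonneg := l2Increment_nonneg volume g (log r)
  have : 0 ≤ ∫ a, g a ^ 2 := integral_nonneg fun a => sq_nonneg _
  rw [← ENNReal.ofReal_add (by positivity) (by positivity)]
  have h_sum := integral_sq_sub_translate hg (log r) 1 (r ^ ((α - 1) / 2))
  rw [one_mul] at h_sum
  rw [← h_sum, ofReal_integral_eq_lintegral_ofReal (integrable_sq_sub_translate hg _ _ _)
    (.of_forall fun a => sq_nonneg _)]
  refine lintegral_Ioi_rpow_mul_sq_of_exp fun a => ?_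
  have h_exp : exp a * r = exp (a + log r) := by rw [exp_add, exp_log hr]
  rw [h_exp, emdenFowler_exp, emdenFowler_exp, rpow_def_of_pos hr, mul_add, exp_add,
    mul_comm (log r)]
  ring

end EmdenFowler

section HalfLineEnergy

lemma lintegral_lintegral_eq_two_mul_Iio {X : Type*} [TopologicalSpace X] [LinearOrder X]
    [OrderClosedTopology X] [SecondCountableTopology X] [MeasurableSpace X]
    [OpensMeasurableSpace X] {μ : Measure X} [SFinite μ] [NullSingletonClass μ]
    {K : X → X → ENNReal} (hK : Measurable (Function.uncurry K)) (hK_symm : ∀ x y, K x y = K y x) :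
    ∫⁻ x, ∫⁻ y, K x y ∂μ ∂μ = 2 * ∫⁻ x, ∫⁻ y in Iio x, K x y ∂μ ∂μ := by
  have h_lt : MeasurableSet {p : X × X | p.2 < p.1} :=
    measurableSet_lt measurable_snd measurable_fst
  have h_gt : MeasurableSet {p : X × X | p.1 < p.2} :=
    measurableSet_lt measurable_fst measurable_snd
  have h_split (x : X) : ∫⁻ y, K x y ∂μ
      = ∫⁻ y in Iio x, K x y ∂μ + ∫⁻ y in Ioi x, K x y ∂μ := by
    rw [← lintegral_add_compl _ (measurableSet_Iio (a := x)), compl_Iio,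
      setLIntegral_congr Ioi_ae_eq_Ici]
  have h_swap : ∫⁻ x, ∫⁻ y in Ioi x, K x y ∂μ ∂μ = ∫⁻ x, ∫⁻ y in Iio x, K x y ∂μ ∂μ := by
    simp only [← lintegral_indicator measurableSet_Ioi, ← lintegral_indicator measurableSet_Iio]
    rw [lintegral_lintegral_swap (f := fun x y => (Ioi x).indicator (K x) y)
      (hK.indicator h_gt).aemeasurable]
    refine lintegral_congr fun y => lintegral_congr fun x => ?_
    simp only [indicator_apply, mem_Ioi, mem_Iio, hK_symm x y]
  simp only [h_split]
  rw [lintegral_add_left, h_swap, two_mul]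
  simp only [← lintegral_indicator measurableSet_Iio]
  exact (hK.indicator h_lt).lintegral_prod_right'

lemma setLIntegral_Iio_eq_lintegral_mul_left {x : ℝ} (hx : 0 < x) (Ψ : ℝ → ENNReal) :
    ∫⁻ y in Iio x, Ψ y = ∫⁻ r in Iio 1, ENNReal.ofReal x * Ψ (x * r) := by
  have h_image : (x * ·) '' Iio 1 = Iio x := by rw [image_mul_left_Iio hx, mul_one]
  rw [← h_image, lintegral_image_eq_lintegral_abs_deriv_mul measurableSet_Iio
    (fun r _ => (hasDerivAt_const_mul x).hasDerivWithinAt)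
    (mul_right_injective₀ hx.ne').injOn]
  simp only [abs_of_pos hx]

lemma gagliardoEnergy_eq_lintegral_dilation {f : ℝ → ℝ} (hf : Measurable f)
    (hf0 : ∀ s ≤ 0, f s = 0) (α : ℝ) :
    gagliardoEnergy volume (1 + α) f = 2 * ∫⁻ r in Iio 1, ENNReal.ofReal ((1 - r) ^ (-1 - α)) *
      ∫⁻ x in Ioi 0, ENNReal.ofReal (x ^ (-α) * (f x - f (x * r)) ^ 2) := by
  have h_dilate {x : ℝ} (hx : 0 < x) :
      ∫⁻ y in Iio x, ENNReal.ofReal ((f x - f y) ^ 2 / ‖x - y‖ ^ (1 + α))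
        = ∫⁻ r in Iio 1, ENNReal.ofReal ((1 - r) ^ (-1 - α)) *
          ENNReal.ofReal (x ^ (-α) * (f x - f (x * r)) ^ 2) := by
    rw [setLIntegral_Iio_eq_lintegral_mul_left hx]
    refine setLIntegral_congr_fun measurableSet_Iio fun r hr => ?_
    have hr0 : 0 < 1 - r := sub_pos.2 hr
    have h_norm : ‖x - x * r‖ = x * (1 - r) := by
      rw [← mul_one_sub, norm_of_nonneg (by positivity)]
    rw [← ENNReal.ofReal_mul hx.le, ← ENNReal.ofReal_mul (by positivity), h_norm,
      mul_rpow hx.le hr0.le, rpow_add hx, rpow_one, show -1 - α = -(1 + α) by ring,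
      rpow_neg hr0.le, rpow_neg hx.le]
    congr 1
    field_simp
  have h_left {x : ℝ} (hx : x ≤ 0) :
      ∫⁻ y in Iio x, ENNReal.ofReal ((f x - f y) ^ 2 / ‖x - y‖ ^ (1 + α)) = 0 := by
    refine setLIntegral_eq_zero measurableSet_Iio fun y hy => ?_
    simp [hf0 x hx, hf0 y (hy.le.trans hx)]
  rw [gagliardoEnergy, lintegral_lintegral_eq_two_mul_Iio (by fun_prop)
      (fun x y => by rw [sub_sq_comm, norm_sub_rev]),
    ← lintegral_add_compl _ (measurableSet_Ioi (a := (0 : ℝ))), compl_Ioi,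
    setLIntegral_eq_zero measurableSet_Iic fun x hx => h_left hx, add_zero,
    setLIntegral_congr_fun measurableSet_Ioi fun x hx => h_dilate hx,
    lintegral_lintegral_swap (by fun_prop)]
  congr 1
  refine lintegral_congr fun r => ?_
  rw [lintegral_const_mul _ (by fun_prop)]

lemma setLIntegral_Iic_one_sub_rpow {α : ℝ} (hα : 0 < α) :
    ∫⁻ r in Iic (0 : ℝ), ENNReal.ofReal ((1 - r) ^ (-1 - α)) = ENNReal.ofReal (1 / α) := by
  have h_preimage : (fun r : ℝ => 1 - r) ⁻¹' Ici 1 = Iic 0 := by simp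
  rw [← h_preimage, (volume.measurePreserving_sub_left (1 : ℝ)).setLIntegral_comp_preimage_emb
      (MeasurableEquiv.subLeft (1 : ℝ)).measurableEmbedding fun t => ENNReal.ofReal (t ^ (-1 - α)),
    ← setLIntegral_congr Ioi_ae_eq_Ici, ← ofReal_integral_eq_lintegral_ofReal
      (integrableOn_Ioi_rpow_of_lt (by linarith) one_pos),
    integral_Ioi_rpow_of_lt (by linarith) one_pos]
  · rw [one_rpow, show -1 - α + 1 = -α by ring, neg_div_neg_eq]
  · exact ae_restrict_of_forall_mem measurableSet_Ioi fun t ht =>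
      rpow_nonneg (zero_le_one.trans (mem_Ioi.1 ht).le) _

end HalfLineEnergy

section OneDimensionalHardy

variable {α : ℝ} {g : ℝ → ℝ}

lemma setLIntegral_Iic_dilation_emdenFowler (hα : 0 < α) (hg2 : MemLp g 2 volume) :
    ∫⁻ r in Iic (0 : ℝ), ENNReal.ofReal ((1 - r) ^ (-1 - α)) * ∫⁻ s in Ioi 0,
        ENNReal.ofReal (s ^ (-α) * (emdenFowler α g s - emdenFowler α g (s * r)) ^ 2)
      = ENNReal.ofReal (1 / α * ∫ a, g a ^ 2) := by
  rw [setLIntegral_congr_fun measurableSet_Iic fun r hr =>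
      congrArg _ (lintegral_emdenFowler_dilation_of_nonpos hg2 hr),
    lintegral_mul_const _ (by fun_prop), setLIntegral_Iic_one_sub_rpow hα,
    ENNReal.ofReal_mul (by positivity)]

lemma setLIntegral_Ioo_dilation_emdenFowler (hα : 0 < α) (hα2 : α < 2) (hg2 : MemLp g 2 volume) :
    ∫⁻ r in Ioo (0 : ℝ) 1, ENNReal.ofReal ((1 - r) ^ (-1 - α)) * ∫⁻ s in Ioi 0,
        ENNReal.ofReal (s ^ (-α) * (emdenFowler α g s - emdenFowler α g (s * r)) ^ 2)
      = ENNReal.ofReal ((∫ r in Ioo (0 : ℝ) 1,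
          (1 - r ^ ((α - 1) / 2)) ^ 2 * (1 - r) ^ (-1 - α)) * ∫ a, g a ^ 2)
        + ∫⁻ r in Ioo (0 : ℝ) 1, ENNReal.ofReal
            ((1 - r) ^ (-1 - α) * (r ^ ((α - 1) / 2) * l2Increment volume g (log r))) := by
  have h_ker {r : ℝ} (hr : r ∈ Ioo (0 : ℝ) 1) : 0 ≤ (1 - r) ^ (-1 - α) :=
    rpow_nonneg (sub_nonneg.2 hr.2.le) _
  rw [← integral_mul_const, ofReal_integral_eq_lintegral_ofReal
      ((integrableOn_one_sub_rpow_sq_mul hα hα2).mul_const _)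
      (ae_restrict_of_forall_mem measurableSet_Ioo fun r hr =>
        mul_nonneg (mul_nonneg (sq_nonneg _) (h_ker hr)) (integral_nonneg fun a => sq_nonneg _)),
    ← lintegral_add_left (by fun_prop)]
  refine setLIntegral_congr_fun measurableSet_Ioo fun r hr => ?_
  rw [lintegral_emdenFowler_dilation_of_pos hg2 hr.1, mul_add, ← ENNReal.ofReal_mul (h_ker hr),
    ← ENNReal.ofReal_mul (h_ker hr)]
  ring_nf

lemma gagliardoEnergy_emdenFowler (hα : 0 < α) (hα2 : α < 2) (hg : Measurable g)
    (hg2 : MemLp g 2 volume) :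
    gagliardoEnergy volume (1 + α) (emdenFowler α g)
      = 2 * (ENNReal.ofReal
          (Gamma ((1 + α) / 2) ^ 2 / π / fracLapConst 1 α * ∫ a, g a ^ 2)
        + ∫⁻ r in Ioo (0 : ℝ) 1, ENNReal.ofReal
            ((1 - r) ^ (-1 - α) * (r ^ ((α - 1) / 2) * l2Increment volume g (log r)))) := by
  have : 0 ≤ ∫ a, g a ^ 2 := integral_nonneg fun a => sq_nonneg _
  have h_int_nonneg :
      0 ≤ ∫ r in Ioo (0 : ℝ) 1, (1 - r ^ ((α - 1) / 2)) ^ 2 * (1 - r) ^ (-1 - α) :=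
    setIntegral_nonneg measurableSet_Ioo fun r hr =>
      mul_nonneg (sq_nonneg _) (rpow_nonneg (sub_nonneg.2 hr.2.le) _)
  rw [gagliardoEnergy_eq_lintegral_dilation (measurable_emdenFowler hg)
      (fun s hs => emdenFowler_of_nonpos hs), ← Iic_union_Ioo_eq_Iio zero_lt_one,
    lintegral_union measurableSet_Ioo
      ((Iic_disjoint_Ioi le_rfl).mono_right Ioo_subset_Ioi_self),
    setLIntegral_Iic_dilation_emdenFowler hα hg2, setLIntegral_Ioo_dilation_emdenFowler hα hα2 hg2,
    ← add_assoc, ← ENNReal.ofReal_add (by positivity) (by positivity), ← add_mul,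
    one_div_add_setIntegral_one_sub_rpow_sq_mul hα hα2, beta_eq_Gamma_sq_div_fracLapConst hα hα2]

lemma setLIntegral_one_sub_rpow_mul_rpow_mul_log_le (hα : 0 < α) (hα2 : α < 2) {N : ℝ → ℝ} {c : ℝ}
    (hc : 0 ≤ c) (hN : ∀ w, N w ≤ c * ‖w‖ ^ 2) :
    ∫⁻ r in Ioo (0 : ℝ) 1, ENNReal.ofReal
        ((1 - r) ^ (-1 - α) * (r ^ ((α - 1) / 2) * N (log r)))
      ≤ ENNReal.ofReal (c * (16 * ProbabilityTheory.beta (α / 2) (2 - α))) := by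
  have h_beta := ((integrableOn_rpow_mul_one_sub_rpow (a := α / 2) (b := 2 - α) (by linarith)
    (by linarith)).const_mul 16).const_mul c
  rw [← setIntegral_rpow_mul_one_sub_rpow (by linarith) (by linarith), ← integral_const_mul,
    ← integral_const_mul, ofReal_integral_eq_lintegral_ofReal h_beta]
  · refine setLIntegral_mono' measurableSet_Ioo fun r hr => ENNReal.ofReal_le_ofReal ?_
    have hr1 : 0 < 1 - r := sub_pos.2 hr.2
    have hr0 : 0 < r := hr.1
    have e1 : r ^ (α / 2 - 1) = r ^ ((α - 1) / 2) * r ^ (-1 / 2 : ℝ) := by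
      rw [← rpow_add hr0]; ring_nf
    have e2 : (1 - r) ^ (2 - α - 1) = (1 - r) ^ (-1 - α) * (1 - r) ^ 2 := by
      rw [← rpow_natCast (1 - r) 2, ← rpow_add hr1]
      push_cast
      ring_nf
    calc (1 - r) ^ (-1 - α) * (r ^ ((α - 1) / 2) * N (log r))
        ≤ (1 - r) ^ (-1 - α) * (r ^ ((α - 1) / 2) *
          (c * (16 * (r ^ (-1 / 2 : ℝ) * (1 - r) ^ 2)))) := by
          gcongr
          refine (hN _).trans ?_
          rw [norm_eq_abs, sq_abs]
          gcongr
          exact log_sq_le_rpow_mul hr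
      _ = c * (16 * (r ^ (α / 2 - 1) * (1 - r) ^ (2 - α - 1))) := by
          rw [e1, e2]
          ring
  · refine ae_restrict_of_forall_mem measurableSet_Ioo fun r hr => ?_
    have hr1 : 0 < 1 - r := sub_pos.2 hr.2
    have hr0 : 0 < r := hr.1
    positivity

lemma exists_contDiff_halfLine_gagliardoEnergy_le (hα : 0 < α) (hα2 : α < 2) {ε : ℝ} (hε : 0 < ε) :
    ∃ f : ℝ → ℝ, ContDiff ℝ ∞ f ∧ HasCompactSupport f ∧ tsupport f ⊆ Ioi 0 ∧
      0 < ∫ s in Ioi 0, f s ^ 2 * s ^ (-α) ∧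
      gagliardoEnergy volume (1 + α) f ≤ ENNReal.ofReal
        ((2 * (Gamma ((1 + α) / 2) ^ 2 / π) / fracLapConst 1 α + ε)
          * ∫ s in Ioi 0, f s ^ 2 * s ^ (-α)) := by
  have h_beta := ProbabilityTheory.beta_pos (α := α / 2) (β := 2 - α) (by linarith) (by linarith)
  have h_const := fracLapConst_pos 1 hα hα2
  set δ : ℝ := ε / (32 * ProbabilityTheory.beta (α / 2) (2 - α)) with hδ_def
  have hδ : 0 < δ := by positivity
  obtain ⟨g, hg, hgs, hg_pos, hg_le⟩ := exists_contDiff_l2Increment_le (volume : Measure ℝ) hδ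
  have hg_meas : Measurable g := hg.continuous.measurable
  have hg2 : MemLp g 2 volume := hg.continuous.memLp_of_hasCompactSupport hgs
  refine ⟨emdenFowler α g, contDiff_emdenFowler hg hgs, hasCompactSupport_emdenFowler hgs,
    tsupport_emdenFowler_subset_Ioi hgs, ?_, ?_⟩
  · rwa [setIntegral_emdenFowler_sq α hg_meas]
  · rw [setIntegral_emdenFowler_sq α hg_meas, gagliardoEnergy_emdenFowler hα hα2 hg_meas hg2]
    calc _ ≤ 2 * (ENNReal.ofReal _ + ENNReal.ofReal _) := by
          gcongr
          exact setLIntegral_one_sub_rpow_mul_rpow_mul_log_le hα hα2 (by positivity) hg_le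
      _ = _ := by
          rw [← ENNReal.ofReal_add (by positivity) (by positivity), ← ENNReal.ofReal_ofNat 2,
            ← ENNReal.ofReal_mul zero_le_two, hδ_def]
          congr 1
          field_simp
          ring

end OneDimensionalHardy

section HalfSpace

section TensorEnergy

variable {V W : Type*} [NormedAddCommGroup V] [InnerProductSpace ℝ V] [FiniteDimensional ℝ V]
  [MeasurableSpace V] [BorelSpace V] [NormedAddCommGroup W] [InnerProductSpace ℝ W]
  [FiniteDimensional ℝ W] [MeasurableSpace W] [BorelSpace W]

lemma gagliardoEnergy_tensor_le {φ : V → ℝ} {f : W → ℝ} (hφ : Continuous φ)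
    (hφs : HasCompactSupport φ) (hf : Continuous f) (hfs : HasCompactSupport f) (q : ℝ) :
    gagliardoEnergy volume q (tensor φ f)
      ≤ ENNReal.ofReal (∫ x, φ x ^ 2) * (∫⁻ z : WithLp 2 (V × W),
            ENNReal.ofReal (‖z‖ ^ (-q) * l2Increment volume f z.snd))
        + ENNReal.ofReal (∫ y, f y ^ 2) * ∫⁻ z : WithLp 2 (V × W),
            ENNReal.ofReal (‖z‖ ^ (-q) * l2Increment volume φ z.fst) := by
  have hu : Continuous (tensor φ f) := by unfold tensor; fun_prop
  have hu2 : MemLp (tensor φ f) 2 :=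
    hu.memLp_of_hasCompactSupport (hasCompactSupport_tensor hφs hfs)
  have hφ2 : MemLp φ 2 := hφ.memLp_of_hasCompactSupport hφs
  have hf2 : MemLp f 2 := hf.memLp_of_hasCompactSupport hfs
  have hf_meas := measurable_l2Increment volume hf.measurable
  rw [gagliardoEnergy_eq_lintegral_l2Increment hu.measurable hu2,
    ← lintegral_const_mul' _ _ ENNReal.ofReal_ne_top,
    ← lintegral_const_mul' _ _ ENNReal.ofReal_ne_top, ← lintegral_add_left (by fun_prop)]
  refine lintegral_mono fun z => ?_
  have hφ_nonneg := l2Increment_nonneg volume φ z.fst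
  have hf_nonneg := l2Increment_nonneg volume f z.snd
  have hφ_sq : 0 ≤ ∫ x, φ x ^ 2 := integral_nonneg fun x => sq_nonneg _
  have hf_sq : 0 ≤ ∫ y, f y ^ 2 := integral_nonneg fun y => sq_nonneg _
  rw [← ENNReal.ofReal_mul hφ_sq, ← ENNReal.ofReal_mul hf_sq, ← ENNReal.ofReal_add (by positivity)
    (by positivity), l2Increment_tensor hφ2 hf2 hu2]
  refine ENNReal.ofReal_le_ofReal ?_
  have h_drop : 0 ≤ ‖z‖ ^ (-q) * (l2Increment volume φ z.fst * l2Increment volume f z.snd / 2) := by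
    positivity
  linarith

end TensorEnergy

variable (V : Type*) [NormedAddCommGroup V] [InnerProductSpace ℝ V] [FiniteDimensional ℝ V]
  [MeasurableSpace V] [BorelSpace V] {α : ℝ}

lemma lintegral_norm_rpow_mul_l2Increment_snd (hα : 0 < α) (hα2 : α < 2) {f : ℝ → ℝ}
    (hf : Measurable f) (hf2 : MemLp f 2) :
    ∫⁻ z : WithLp 2 (V × ℝ),
        ENNReal.ofReal (‖z‖ ^ (-(finrank ℝ V + 1 + α)) * l2Increment volume f z.snd)
      = ENNReal.ofReal (fracLapConst 1 α / fracLapConst (finrank ℝ V + 1) α)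
        * gagliardoEnergy volume (1 + α) f := by
  rw [lintegral_norm_rpow_mul_comp_snd (by linarith) (measurable_l2Increment volume hf),
    gagliardoEnergy_eq_lintegral_l2Increment hf hf2, ← pi_rpow_mul_Gamma_div_Gamma _ hα hα2,
    show finrank ℝ V + 1 + α - finrank ℝ V = 1 + α by ring]
  rfl

lemma exists_contDiff_lintegral_norm_rpow_mul_l2Increment_fst_le (hα : 0 < α) (hα2 : α < 2)
    {ε : ℝ} (hε : 0 < ε) :
    ∃ φ : V → ℝ, ContDiff ℝ ∞ φ ∧ HasCompactSupport φ ∧ 0 < ∫ x, φ x ^ 2 ∧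
      ∫⁻ z : WithLp 2 (V × ℝ),
        ENNReal.ofReal (‖z‖ ^ (-(finrank ℝ V + 1 + α)) * l2Increment volume φ z.fst)
      ≤ ENNReal.ofReal ((∫ x, φ x ^ 2) * ε) := by
  have h_finrank : (finrank ℝ (WithLp 2 (V × ℝ)) : ℝ) = finrank ℝ V + 1 := by
    rw [(WithLp.linearEquiv 2 ℝ (V × ℝ)).finrank_eq, finrank_prod, finrank_self]
    push_cast
    rfl
  obtain ⟨δ, hδ, hδ_le⟩ := exists_lintegral_norm_rpow_mul_min_le
    (volume : Measure (WithLp 2 (V × ℝ))) hα hα2 hε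
  rw [h_finrank] at hδ_le
  obtain ⟨φ, hφ, hφs, hφ_pos, hφ_le⟩ := exists_contDiff_l2Increment_le (volume : Measure V) hδ
  refine ⟨φ, hφ, hφs, hφ_pos, ?_⟩
  have h_min (z : WithLp 2 (V × ℝ)) :
      l2Increment volume φ z.fst ≤ (∫ x, φ x ^ 2) * min 4 (δ * ‖z‖ ^ 2) := by
    rw [mul_min_of_nonneg _ _ hφ_pos.le, mul_comm _ 4]
    refine le_min (l2Increment_le_four_mul (hφ.continuous.memLp_of_hasCompactSupport hφs) _)
      ((hφ_le _).trans ?_)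
    rw [mul_comm δ, mul_assoc]
    gcongr
    exact WithLp.norm_fst_le V z
  rw [ENNReal.ofReal_mul hφ_pos.le]
  refine le_trans ?_ (mul_le_mul_right hδ_le _)
  rw [← lintegral_const_mul' _ _ ENNReal.ofReal_ne_top]
  refine lintegral_mono fun z => ?_
  rw [← ENNReal.ofReal_mul hφ_pos.le, mul_left_comm]
  gcongr
  exact h_min z

lemma exists_contDiff_halfSpace_gagliardoEnergy_le (hα : 0 < α) (hα2 : α < 2) {ε : ℝ}
    (hε : 0 < ε) :
    ∃ u : WithLp 2 (V × ℝ) → ℝ, ContDiff ℝ ∞ u ∧ HasCompactSupport u ∧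
      tsupport u ⊆ {p | 0 < p.snd} ∧ 0 < ∫ p in {p | 0 < p.snd}, u p ^ 2 * p.snd ^ (-α) ∧
      gagliardoEnergy volume (finrank ℝ V + 1 + α) u ≤ ENNReal.ofReal
        ((2 * (Gamma ((1 + α) / 2) ^ 2 / π) / fracLapConst (finrank ℝ V + 1) α + ε)
          * ∫ p in {p | 0 < p.snd}, u p ^ 2 * p.snd ^ (-α)) := by
  have hA1 := fracLapConst_pos 1 hα hα2
  have hA := fracLapConst_pos (finrank ℝ V + 1) hα hα2
  set A₁ := fracLapConst 1 α
  set A := fracLapConst (finrank ℝ V + 1) α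
  obtain ⟨f, hf, hfs, hf_supp, hw_pos, hf_le⟩ := exists_contDiff_halfLine_gagliardoEnergy_le hα hα2
    (show 0 < ε * A / (2 * A₁) by positivity)
  set w := ∫ s in Ioi 0, f s ^ 2 * s ^ (-α)
  have hf_sq : 0 ≤ ∫ s, f s ^ 2 := integral_nonneg fun s => sq_nonneg _
  obtain ⟨φ, hφ, hφs, hφ_pos, hφ_le⟩ := exists_contDiff_lintegral_norm_rpow_mul_l2Increment_fst_le V
    hα hα2 (show 0 < ε * w / (2 * ((∫ s, f s ^ 2) + 1)) by positivity)
  have h_weight : ∫ p : WithLp 2 (V × ℝ) in {p | 0 < p.snd},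
      tensor φ f p ^ 2 * p.snd ^ (-α) = (∫ x, φ x ^ 2) * w := by
    rw [← setIntegral_tensor (fun x => φ x ^ 2) (fun s => f s ^ 2 * s ^ (-α)) (Ioi 0)]
    simp only [tensor, mul_pow, mul_assoc, mem_Ioi]
  refine ⟨tensor φ f, contDiff_tensor hφ hf, hasCompactSupport_tensor hφs hfs,
    fun p hp => hf_supp (tsupport_tensor_subset φ f hp).2, by rw [h_weight]; positivity, ?_⟩
  refine (gagliardoEnergy_tensor_le hφ.continuous hφs hf.continuous hfs _).trans ?_
  rw [lintegral_norm_rpow_mul_l2Increment_snd V hα hα2 hf.continuous.measurable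
    (hf.continuous.memLp_of_hasCompactSupport hfs), h_weight]
  refine (add_le_add (mul_le_mul_right (mul_le_mul_right hf_le _) _)
    (mul_le_mul_right hφ_le _)).trans ?_
  rw [← ENNReal.ofReal_mul (by positivity), ← ENNReal.ofReal_mul (by positivity),
    ← ENNReal.ofReal_mul (by positivity), ← ENNReal.ofReal_add (by positivity) (by positivity)]
  refine ENNReal.ofReal_le_ofReal ?_
  set κ := Gamma ((1 + α) / 2) ^ 2 / π
  set F := ∫ s, f s ^ 2
  set Φ := ∫ x, φ x ^ 2
  calc Φ * (A₁ / A * ((2 * κ / A₁ + ε * A / (2 * A₁)) * w)) + F * (Φ * (ε * w / (2 * (F + 1))))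
      = (2 * κ / A + ε / 2) * (Φ * w) + F / (F + 1) * (ε / 2 * (Φ * w)) := by field_simp
    _ ≤ (2 * κ / A + ε / 2) * (Φ * w) + 1 * (ε / 2 * (Φ * w)) := by
        gcongr
        exact div_le_one_of_le₀ (by linarith) (by positivity)
    _ = (2 * κ / A + ε) * (Φ * w) := by ring

end HalfSpace

/-- The isometry of `ℝ^{d+1}` onto `ℝ^d × ℝ` that splits off the last coordinate. -/
noncomputable def splitLast (d : ℕ) :
    EuclideanSpace ℝ (Fin (d + 1)) ≃ₗᵢ[ℝ] WithLp 2 (EuclideanSpace ℝ (Fin d) × ℝ) :=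
  LinearIsometry.toLinearIsometryEquiv
    { toFun := fun x => .toLp 2 (.toLp 2 (Fin.init x.ofLp), x (Fin.last d))
      map_add' := fun _ _ => rfl
      map_smul' := fun _ _ => rfl
      norm_map' := fun x => by
        rw [← sq_eq_sq₀ (norm_nonneg _) (norm_nonneg _), WithLp.prod_norm_sq_eq_of_L2,
          EuclideanSpace.norm_sq_eq, EuclideanSpace.norm_sq_eq, Fin.sum_univ_castSucc]
        rfl }
    (by simp [(WithLp.linearEquiv 2 ℝ (EuclideanSpace ℝ (Fin d) × ℝ)).finrank_eq])

lemma exists_contDiff_gagliardoEnergy_le (d : ℕ) {α : ℝ} (hα : 0 < α) (hα2 : α < 2) {ε : ℝ}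
    (hε : 0 < ε) :
    ∃ u : EuclideanSpace ℝ (Fin (d + 1)) → ℝ, ContDiff ℝ ∞ u ∧ HasCompactSupport u ∧
      tsupport u ⊆ halfSpace d ∧ 0 < ∫ x in halfSpace d, u x ^ 2 * x (Fin.last d) ^ (-α) ∧
      gagliardoEnergy volume (d + 1 + α) u ≤ ENNReal.ofReal
        ((2 * (Gamma ((1 + α) / 2) ^ 2 / π) / fracLapConst (d + 1) α + ε)
          * ∫ x in halfSpace d, u x ^ 2 * x (Fin.last d) ^ (-α)) := by
  obtain ⟨u, hu, hus, hu_supp, hu_pos, hu_le⟩ :=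
    exists_contDiff_halfSpace_gagliardoEnergy_le (EuclideanSpace ℝ (Fin d)) hα hα2 hε
  rw [finrank_euclideanSpace_fin] at hu_le
  set e := splitLast d
  have h_weight : ∫ x in halfSpace d, u (e x) ^ 2 * x (Fin.last d) ^ (-α)
      = ∫ p in {p | 0 < p.snd}, u p ^ 2 * p.snd ^ (-α) :=
    e.measurePreserving.setIntegral_preimage_emb e.toHomeomorph.measurableEmbedding
      (fun p => u p ^ 2 * p.snd ^ (-α)) {p | 0 < p.snd}
  refine ⟨u ∘ e, hu.comp e.contDiff, hus.comp_homeomorph e.toHomeomorph, ?_, ?_, ?_⟩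
  · rw [show u ∘ e = u ∘ e.toHomeomorph from rfl, tsupport_comp_eq_preimage]
    exact preimage_mono hu_supp
  · exact h_weight ▸ hu_pos
  · simp only [Function.comp_apply]
    rw [h_weight, show u ∘ e = u ∘ e.toIsometryEquiv from rfl, gagliardoEnergy_comp_isometryEquiv
      e.toIsometryEquiv e.measurePreserving]
    exact hu_le

theorem fractional_hardy_killed_optimal (d : ℕ) (α : ℝ) (hα0 : 0 < α) (hα2 : α < 2)
    (K : ℝ) (hK : Real.Gamma ((1 + α) / 2) ^ 2 / Real.pi < K) :
    ∃ u : EuclideanSpace ℝ (Fin (d + 1)) → ℝ, ContDiff ℝ (⊤ : ℕ∞) u ∧ HasCompactSupport u ∧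
      tsupport u ⊆ halfSpace d ∧
      (1 / 2) * fracLapConst (d + 1) α *
          ∫ x : EuclideanSpace ℝ (Fin (d + 1)), ∫ y : EuclideanSpace ℝ (Fin (d + 1)),
            (u x - u y) ^ 2 / ‖x - y‖ ^ ((d : ℝ) + 1 + α) <
        K * ∫ x in halfSpace d, u x ^ 2 * x (Fin.last d) ^ (-α) := by
  set κ := Gamma ((1 + α) / 2) ^ 2 / π
  set A := fracLapConst (d + 1) α
  have hA : 0 < A := fracLapConst_pos (d + 1) hα0 hα2
  have : 0 ≤ κ := by positivity
  have hε : 0 < (K - κ) / A := div_pos (sub_pos.2 hK) hA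
  obtain ⟨u, hu, hus, hu_supp, hW, hu_le⟩ := exists_contDiff_gagliardoEnergy_le d hα0 hα2 hε
  refine ⟨u, hu, hus, hu_supp, ?_⟩
  set W := ∫ x in halfSpace d, u x ^ 2 * x (Fin.last d) ^ (-α)
  have h_energy := integral_integral_le_of_lintegral_lintegral_le
    (fun x y => by positivity) (by positivity) hu_le
  calc 1 / 2 * A * ∫ x, ∫ y, (u x - u y) ^ 2 / ‖x - y‖ ^ ((d : ℝ) + 1 + α)
      ≤ 1 / 2 * A * ((2 * κ / A + (K - κ) / A) * W) := by gcongr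
    _ = (κ + K) / 2 * W := by field_simp; ring
    _ < K * W := by gcongr; linarith
end

section
/- Let 0 < α < 2, d ≥ 1, D = {x ∈ ℝ^d : x_d > 0}, and let −1 < r < α. There exists a constant c > 0 (depending only on d, α, r) such that for every a > 0 and every x ∈ D, ∫_{D \ B(x,a)} y_d^r / |x − y|^{d+α} dy ≤ c · a^{−α} · (max(a, x_d))^r. -/
open MeasureTheory Real Set

/-!
Let `μ` be the measure `y_d ^ r dy` on the half-space of `ℝ^{d+1}`. Integrating in the last
coordinate gives `μ (B(x, R)) ≤ C R ^ (d + 1) max(R, x_d) ^ r`, which for `R ≥ a` is at most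
`C a ^ (-r⁺) max(a, x_d) ^ r R ^ (d + 1 + r⁺)` with `r⁺ = max r 0`. Cut the complement of `B(x, a)`
into dyadic annuli and bound the kernel `|x - y| ^ (-(d + 1 + α))` by its value on each inner
sphere: the annuli contribute a geometric series, convergent because `r⁺ < α`.
-/

open Metric
open scoped ENNReal

lemma rpow_le_rpow_max_zero_mul_rpow {u v K : ℝ} (hu : 0 < u) (huv : u ≤ v) (hvK : v ≤ K * u)
    (r : ℝ) : v ^ r ≤ K ^ max r 0 * u ^ r := by
  rcases le_total 0 r with hr | hr
  · have hK : 0 ≤ K := nonneg_of_mul_nonneg_left (hu.le.trans (huv.trans hvK)) hu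
    rw [max_eq_left hr, ← mul_rpow hK hu.le]
    exact rpow_le_rpow (hu.le.trans huv) hvK hr
  · rw [max_eq_right hr, rpow_zero, one_mul]
    exact rpow_le_rpow_of_nonpos hu huv hr

lemma max_rpow_le_div_rpow_mul_max_rpow {a R : ℝ} (ha : 0 < a) (haR : a ≤ R) (t r : ℝ) :
    max R t ^ r ≤ (R / a) ^ max r 0 * max a t ^ r := by
  have hm : 0 < max a t := lt_max_of_lt_left ha
  have hRa : 1 ≤ R / a := (one_le_div ha).2 haR
  refine rpow_le_rpow_max_zero_mul_rpow hm (max_le_max_right t haR) (max_le ?_ ?_) r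
  · calc R = R / a * a := (div_mul_cancel₀ R ha.ne').symm
      _ ≤ R / a * max a t := by gcongr; exact le_max_left a t
  · exact (le_max_right a t).trans (le_mul_of_one_le_left hm.le hRa)

section OneDimensional

variable {r : ℝ}

lemma lintegral_Ioc_zero_rpow (hr : -1 < r) {b : ℝ} (hb : 0 ≤ b) :
    ∫⁻ t in Ioc 0 b, ENNReal.ofReal (t ^ r) = ENNReal.ofReal (b ^ (r + 1) / (r + 1)) := by
  have hint : IntegrableOn (fun t : ℝ => t ^ r) (Ioc 0 b) :=
    (intervalIntegrable_iff_integrableOn_Ioc_of_le hb).1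
      (intervalIntegral.intervalIntegrable_rpow' hr)
  have hnonneg : 0 ≤ᵐ[volume.restrict (Ioc 0 b)] fun t : ℝ => t ^ r := by
    filter_upwards [ae_restrict_mem measurableSet_Ioc] with t ht
    exact rpow_nonneg ht.1.le r
  rw [← ofReal_integral_eq_lintegral_ofReal hint hnonneg, ← intervalIntegral.integral_of_le hb,
    integral_rpow (Or.inl hr), zero_rpow (by linarith), sub_zero]

lemma lintegral_ball_rpow_le_of_two_mul_le {R t₀ : ℝ} (hR : 0 < R) (ht₀ : 2 * R ≤ t₀) :
    ∫⁻ t in ball t₀ R, ENNReal.ofReal (t ^ r) ≤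
      ENNReal.ofReal (3 ^ max r 0 * (2 * (1 / 2) ^ r) * R * t₀ ^ r) := by
  have hpos : 0 < t₀ := by linarith
  have hpow : ∀ t ∈ ball t₀ R, t ^ r ≤ 3 ^ max r 0 * (1 / 2 * t₀) ^ r := by
    intro t ht
    rw [Real.ball_eq_Ioo] at ht
    exact rpow_le_rpow_max_zero_mul_rpow (by positivity) (by linarith [ht.1])
      (by linarith [ht.2]) r
  calc ∫⁻ t in ball t₀ R, ENNReal.ofReal (t ^ r)
      ≤ ∫⁻ _ in ball t₀ R, ENNReal.ofReal (3 ^ max r 0 * (1 / 2 * t₀) ^ r) :=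
        setLIntegral_mono measurable_const fun t ht => ENNReal.ofReal_le_ofReal (hpow t ht)
    _ = ENNReal.ofReal (3 ^ max r 0 * (2 * (1 / 2) ^ r) * R * t₀ ^ r) := by
        rw [setLIntegral_const, Real.volume_ball, ← ENNReal.ofReal_mul (by positivity),
          mul_rpow (by norm_num) hpos.le]
        congr 1
        ring

lemma lintegral_Ioi_inter_ball_rpow_le_of_le_two_mul (hr : -1 < r) {R t₀ : ℝ} (hR : 0 < R)
    (ht₀ : t₀ ≤ 2 * R) :
    ∫⁻ t in Ioi 0 ∩ ball t₀ R, ENNReal.ofReal (t ^ r) ≤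
      ENNReal.ofReal (3 ^ max r 0 * (3 / (r + 1)) * R * max R t₀ ^ r) := by
  have hr' : 0 < r + 1 := by linarith
  have hsubset : Ioi 0 ∩ ball t₀ R ⊆ Ioc 0 (3 * R) := by
    rintro t ⟨ht, htball⟩
    rw [Real.ball_eq_Ioo] at htball
    exact ⟨ht, by linarith [htball.2]⟩
  have hpow : (3 * R) ^ r ≤ 3 ^ max r 0 * max R t₀ ^ r :=
    rpow_le_rpow_max_zero_mul_rpow (lt_max_of_lt_left hR) (max_le (by linarith) (by linarith))
      (by linarith [le_max_left R t₀]) r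
  calc ∫⁻ t in Ioi 0 ∩ ball t₀ R, ENNReal.ofReal (t ^ r)
      ≤ ∫⁻ t in Ioc 0 (3 * R), ENNReal.ofReal (t ^ r) := lintegral_mono_set hsubset
    _ = ENNReal.ofReal ((3 * R) ^ r * (3 * R) / (r + 1)) := by
        rw [lintegral_Ioc_zero_rpow hr (by positivity), rpow_add_one (by positivity)]
    _ ≤ ENNReal.ofReal (3 ^ max r 0 * max R t₀ ^ r * (3 * R) / (r + 1)) := by gcongr
    _ = ENNReal.ofReal (3 ^ max r 0 * (3 / (r + 1)) * R * max R t₀ ^ r) := by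
        congr 1
        ring

lemma exists_lintegral_Ioi_inter_ball_rpow_le (hr : -1 < r) :
    ∃ C : ℝ, 0 < C ∧ ∀ R t₀ : ℝ, 0 < R →
      ∫⁻ t in Ioi 0 ∩ ball t₀ R, ENNReal.ofReal (t ^ r) ≤
        ENNReal.ofReal (C * R * max R t₀ ^ r) := by
  have : 0 < r + 1 := by linarith
  refine ⟨3 ^ max r 0 * max (2 * (1 / 2) ^ r) (3 / (r + 1)), by positivity, fun R t₀ hR => ?_⟩
  rcases le_total (2 * R) t₀ with hfar | hnear
  · calc ∫⁻ t in Ioi 0 ∩ ball t₀ R, ENNReal.ofReal (t ^ r)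
        ≤ ∫⁻ t in ball t₀ R, ENNReal.ofReal (t ^ r) := lintegral_mono_set inter_subset_right
      _ ≤ ENNReal.ofReal (3 ^ max r 0 * (2 * (1 / 2) ^ r) * R * max R t₀ ^ r) := by
          rw [max_eq_right (by linarith : R ≤ t₀)]
          exact lintegral_ball_rpow_le_of_two_mul_le hR hfar
      _ ≤ _ := by gcongr; exact le_max_left _ _
  · refine (lintegral_Ioi_inter_ball_rpow_le_of_le_two_mul hr hR hnear).trans ?_
    gcongr
    exact le_max_right _ _

end OneDimensional

section Coordinates

variable {ι : Type*} [Fintype ι] (i : ι)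

lemma lintegral_pi_ball_eval (x : ι → ℝ) {R : ℝ} (hR : 0 < R) {f : ℝ → ℝ≥0∞}
    (hf : Measurable f) :
    ∫⁻ y in ball x R, f (y i) =
      ENNReal.ofReal (2 * R) ^ (Fintype.card ι - 1) * ∫⁻ t in ball (x i) R, f t := by
  classical
  have hmap : (volume.restrict (ball x R)).map (Function.eval i) =
      ENNReal.ofReal (2 * R) ^ (Fintype.card ι - 1) • volume.restrict (ball (x i) R) := by
    rw [ball_pi x hR, volume_pi, Measure.restrict_pi_pi, Measure.pi_map_eval]
    simp only [Measure.restrict_apply_univ, Real.volume_ball, Finset.prod_const,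
      Finset.card_erase_of_mem (Finset.mem_univ i), Finset.card_univ]
  calc ∫⁻ y in ball x R, f (y i)
      = ∫⁻ t, f t ∂(volume.restrict (ball x R)).map (Function.eval i) :=
        (lintegral_map hf (measurable_pi_apply i)).symm
    _ = _ := by rw [hmap, lintegral_smul_measure, smul_eq_mul]

lemma lintegral_euclidean_ball_apply_le (x : EuclideanSpace ℝ ι) {R : ℝ} (hR : 0 < R)
    {f : ℝ → ℝ≥0∞} (hf : Measurable f) :
    ∫⁻ y in ball x R, f (y i) ≤
      ENNReal.ofReal (2 * R) ^ (Fintype.card ι - 1) * ∫⁻ t in ball (x i) R, f t := by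
  have hsubset : ball x R ⊆ WithLp.ofLp ⁻¹' ball (WithLp.ofLp x) R := fun y hy =>
    (dist_pi_lt_iff hR).2 fun j => (PiLp.dist_apply_le y x j).trans_lt hy
  calc ∫⁻ y in ball x R, f (y i)
      ≤ ∫⁻ y in WithLp.ofLp ⁻¹' ball (WithLp.ofLp x) R, f (WithLp.ofLp y i) :=
        lintegral_mono_set hsubset
    _ = ∫⁻ z in ball (WithLp.ofLp x) R, f (z i) :=
        (PiLp.volume_preserving_ofLp ι).setLIntegral_comp_preimage measurableSet_ball
          (hf.comp (measurable_pi_apply i))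
    _ = _ := lintegral_pi_ball_eval i _ hR hf

end Coordinates

section DyadicAnnuli

variable {X : Type*} [PseudoMetricSpace X]

lemma compl_ball_subset_iUnion_dyadic_annuli (x : X) {a : ℝ} (ha : 0 < a) :
    (ball x a)ᶜ ⊆ ⋃ k : ℕ, ball x (2 ^ (k + 1) * a) \ ball x (2 ^ k * a) := by
  intro y hy
  rw [mem_compl_iff, mem_ball, not_lt] at hy
  obtain ⟨k, hlower, hupper⟩ := exists_nat_pow_near ((one_le_div ha).2 hy) one_lt_two
  exact mem_iUnion.2 ⟨k, (div_lt_iff₀ ha).1 hupper, not_lt.2 ((le_div_iff₀ ha).1 hlower)⟩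

variable [MeasurableSpace X] {μ : Measure X} {p s : ℝ}

lemma setLIntegral_annulus_dist_rpow_neg_le (x : X) {ρ : ℝ} (hρ : 0 < ρ) (R : ℝ) (hp : 0 ≤ p) :
    ∫⁻ y in ball x R \ ball x ρ, ENNReal.ofReal (dist y x ^ (-p)) ∂μ ≤
      ENNReal.ofReal (ρ ^ (-p)) * μ (ball x R) := by
  calc ∫⁻ y in ball x R \ ball x ρ, ENNReal.ofReal (dist y x ^ (-p)) ∂μ
      ≤ ∫⁻ _ in ball x R \ ball x ρ, ENNReal.ofReal (ρ ^ (-p)) ∂μ :=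
        setLIntegral_mono measurable_const fun y hy => ENNReal.ofReal_le_ofReal <|
          rpow_le_rpow_of_nonpos hρ (not_lt.1 hy.2) (neg_nonpos.2 hp)
    _ ≤ _ := by
        rw [setLIntegral_const]
        gcongr
        exact sdiff_subset

lemma setLIntegral_compl_ball_dist_rpow_neg_le [OpensMeasurableSpace X] {x : X} {a : ℝ}
    (ha : 0 < a) (hp : 0 ≤ p) (hsp : s < p) {M : ℝ≥0∞}
    (hμ : ∀ R, a ≤ R → μ (ball x R) ≤ M * ENNReal.ofReal (R ^ s)) :
    ∫⁻ y in (ball x a)ᶜ, ENNReal.ofReal (dist y x ^ (-p)) ∂μ ≤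
      M * ENNReal.ofReal (2 ^ s / (1 - 2 ^ (s - p)) * a ^ (s - p)) := by
  have hq : (2 : ℝ) ^ (s - p) < 1 := rpow_lt_one_of_one_lt_of_neg one_lt_two (sub_neg.2 hsp)
  have hscale (k : ℕ) : (2 ^ k * a) ^ (-p) * (2 ^ (k + 1) * a) ^ s =
      2 ^ s * a ^ (s - p) * (2 ^ (s - p)) ^ k := by
    rw [show (2 : ℝ) ^ (k + 1) * a = 2 * (2 ^ k * a) by ring, mul_rpow two_pos.le (by positivity),
      mul_left_comm, ← rpow_add (by positivity), neg_add_eq_sub, mul_rpow (by positivity) ha.le,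
      rpow_pow_comm two_pos.le]
    ring
  have hannulus (k : ℕ) :
      ∫⁻ y in ball x (2 ^ (k + 1) * a) \ ball x (2 ^ k * a),
          ENNReal.ofReal (dist y x ^ (-p)) ∂μ ≤
        M * ENNReal.ofReal (2 ^ s * a ^ (s - p) * (2 ^ (s - p)) ^ k) := by
    calc _ ≤ ENNReal.ofReal ((2 ^ k * a) ^ (-p)) * μ (ball x (2 ^ (k + 1) * a)) :=
          setLIntegral_annulus_dist_rpow_neg_le x (by positivity) _ hp
      _ ≤ ENNReal.ofReal ((2 ^ k * a) ^ (-p)) * (M * ENNReal.ofReal ((2 ^ (k + 1) * a) ^ s)) := by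
          gcongr
          exact hμ _ (le_mul_of_one_le_left ha.le (one_le_pow₀ one_le_two))
      _ = _ := by rw [mul_left_comm, ← ENNReal.ofReal_mul (by positivity), hscale]
  calc ∫⁻ y in (ball x a)ᶜ, ENNReal.ofReal (dist y x ^ (-p)) ∂μ
      ≤ ∫⁻ y in ⋃ k : ℕ, ball x (2 ^ (k + 1) * a) \ ball x (2 ^ k * a),
          ENNReal.ofReal (dist y x ^ (-p)) ∂μ :=
        lintegral_mono_set (compl_ball_subset_iUnion_dyadic_annuli x ha)
    _ ≤ ∑' k : ℕ, M * ENNReal.ofReal (2 ^ s * a ^ (s - p) * (2 ^ (s - p)) ^ k) :=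
        (lintegral_iUnion_le _ _).trans (ENNReal.tsum_le_tsum hannulus)
    _ = M * ENNReal.ofReal (2 ^ s / (1 - 2 ^ (s - p)) * a ^ (s - p)) := by
        have hsum := (hasSum_geometric_of_lt_one (by positivity) hq).mul_left (2 ^ s * a ^ (s - p))
        rw [ENNReal.tsum_mul_left,
          ← ENNReal.ofReal_tsum_of_nonneg (fun k => by positivity) hsum.summable, hsum.tsum_eq]
        congr 2
        ring

end DyadicAnnuli

lemma integrable_and_integral_le_of_lintegral_ofReal_le {X : Type*} [MeasurableSpace X]
    {μ : Measure X} {f : X → ℝ} {K : ℝ} (hf : AEStronglyMeasurable f μ) (hf0 : 0 ≤ᵐ[μ] f)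
    (hK : 0 ≤ K) (h : ∫⁻ y, ENNReal.ofReal (f y) ∂μ ≤ ENNReal.ofReal K) :
    Integrable f μ ∧ ∫ y, f y ∂μ ≤ K := by
  refine ⟨(lintegral_ofReal_ne_top_iff_integrable hf hf0).1
    (ne_top_of_le_ne_top ENNReal.ofReal_ne_top h), ?_⟩
  rw [integral_eq_lintegral_of_nonneg_ae hf0 hf]
  exact ENNReal.toReal_le_of_le_ofReal hK h

section HalfSpace

variable {d : ℕ} {r : ℝ}

/-- The measure `y_d ^ r dy` on the half-space `y_d > 0`, extended by zero to the whole space. It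
turns the integral of the theorem into that of the radial kernel `|x - y| ^ (-p)`. -/
noncomputable def halfSpaceRpowMeasure (d : ℕ) (r : ℝ) :
    Measure (EuclideanSpace ℝ (Fin (d + 1))) :=
  (volume.restrict (halfSpace d)).withDensity fun y => ENNReal.ofReal (y (Fin.last d) ^ r)

lemma measurableSet_halfSpace (d : ℕ) : MeasurableSet (halfSpace d) :=
  (isOpen_lt continuous_const (by fun_prop)).measurableSet

lemma halfSpaceRpowMeasure_ball_le (x : EuclideanSpace ℝ (Fin (d + 1))) {R : ℝ} (hR : 0 < R) :
    halfSpaceRpowMeasure d r (ball x R) ≤ ENNReal.ofReal (2 * R) ^ d *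
      ∫⁻ t in Ioi 0 ∩ ball (x (Fin.last d)) R, ENNReal.ofReal (t ^ r) := by
  let f : ℝ → ℝ≥0∞ := (Ioi 0).indicator fun t => ENNReal.ofReal (t ^ r)
  have hf : Measurable f := Measurable.indicator (by fun_prop) measurableSet_Ioi
  calc halfSpaceRpowMeasure d r (ball x R)
      = ∫⁻ y in ball x R, f (y (Fin.last d)) := by
        rw [halfSpaceRpowMeasure, withDensity_apply _ measurableSet_ball,
          Measure.restrict_restrict measurableSet_ball, inter_comm,
          ← setLIntegral_indicator (measurableSet_halfSpace d)]
        rfl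
    _ ≤ ENNReal.ofReal (2 * R) ^ d * ∫⁻ t in ball (x (Fin.last d)) R, f t := by
        simpa only [Fintype.card_fin, Nat.add_sub_cancel] using
          lintegral_euclidean_ball_apply_le (Fin.last d) x hR hf
    _ = _ := by rw [setLIntegral_indicator measurableSet_Ioi]

lemma exists_halfSpaceRpowMeasure_ball_le (d : ℕ) (hr : -1 < r) :
    ∃ C : ℝ, 0 < C ∧ ∀ (x : EuclideanSpace ℝ (Fin (d + 1))) (R : ℝ), 0 < R →
      halfSpaceRpowMeasure d r (ball x R) ≤
        ENNReal.ofReal (C * R ^ (d + 1) * max R (x (Fin.last d)) ^ r) := by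
  obtain ⟨C, hC, hline⟩ := exists_lintegral_Ioi_inter_ball_rpow_le hr
  refine ⟨2 ^ d * C, by positivity, fun x R hR => ?_⟩
  calc halfSpaceRpowMeasure d r (ball x R)
      ≤ ENNReal.ofReal (2 * R) ^ d *
          ENNReal.ofReal (C * R * max R (x (Fin.last d)) ^ r) := by
        refine (halfSpaceRpowMeasure_ball_le x hR).trans ?_
        gcongr
        exact hline R _ hR
    _ = _ := by
        rw [← ENNReal.ofReal_pow (by positivity), ← ENNReal.ofReal_mul (by positivity)]
        congr 1
        ring

lemma exists_halfSpaceRpowMeasure_ball_le_rpow (d : ℕ) (hr : -1 < r) :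
    ∃ C : ℝ, 0 < C ∧ ∀ (x : EuclideanSpace ℝ (Fin (d + 1))) (a : ℝ), 0 < a → ∀ R, a ≤ R →
      halfSpaceRpowMeasure d r (ball x R) ≤
        ENNReal.ofReal (C * a ^ (-max r 0) * max a (x (Fin.last d)) ^ r) *
          ENNReal.ofReal (R ^ ((d : ℝ) + 1 + max r 0)) := by
  obtain ⟨C, hC, hball⟩ := exists_halfSpaceRpowMeasure_ball_le d hr
  refine ⟨C, hC, fun x a ha R haR => ?_⟩
  have hR : 0 < R := ha.trans_le haR
  calc halfSpaceRpowMeasure d r (ball x R)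
      ≤ ENNReal.ofReal (C * R ^ (d + 1) * max R (x (Fin.last d)) ^ r) := hball x R hR
    _ ≤ ENNReal.ofReal
          (C * R ^ (d + 1) * ((R / a) ^ max r 0 * max a (x (Fin.last d)) ^ r)) := by
        gcongr
        exact max_rpow_le_div_rpow_mul_max_rpow ha haR _ r
    _ = _ := by
        rw [← ENNReal.ofReal_mul (by positivity), div_rpow hR.le ha.le, rpow_neg ha.le,
          rpow_add hR, ← Nat.cast_add_one, rpow_natCast]
        congr 1
        ring

lemma setLIntegral_halfSpace_diff_ball (x : EuclideanSpace ℝ (Fin (d + 1))) (a p : ℝ) :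
    ∫⁻ y in halfSpace d \ ball x a, ENNReal.ofReal (y (Fin.last d) ^ r / ‖x - y‖ ^ p) =
      ∫⁻ y in (ball x a)ᶜ, ENNReal.ofReal (dist y x ^ (-p)) ∂halfSpaceRpowMeasure d r := by
  have hball : MeasurableSet (ball x a)ᶜ := measurableSet_ball.compl
  rw [halfSpaceRpowMeasure, setLIntegral_withDensity_eq_setLIntegral_mul _ (by fun_prop)
    (by fun_prop) hball, Measure.restrict_restrict hball, inter_comm, ← sdiff_eq]
  refine setLIntegral_congr_fun ((measurableSet_halfSpace d).diff measurableSet_ball) ?_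
  rintro y ⟨hy, -⟩
  have hy' : 0 ≤ y (Fin.last d) ^ r := rpow_nonneg (le_of_lt hy) r
  simp only [Pi.mul_apply]
  rw [← ENNReal.ofReal_mul hy', rpow_neg dist_nonneg, dist_comm, dist_eq_norm, div_eq_mul_inv]

end HalfSpace

theorem integral_away_from_ball_bound_general (d : ℕ) {α r : ℝ} (hα : 0 < α) (hr : -1 < r)
    (hrα : r < α) :
    ∃ c : ℝ, 0 < c ∧ ∀ a : ℝ, 0 < a → ∀ x : EuclideanSpace ℝ (Fin (d + 1)),
      IntegrableOn (fun y => y (Fin.last d) ^ r / ‖x - y‖ ^ ((d : ℝ) + 1 + α))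
          (halfSpace d \ ball x a) ∧
        ∫ y in halfSpace d \ ball x a, y (Fin.last d) ^ r / ‖x - y‖ ^ ((d : ℝ) + 1 + α) ≤
          c * a ^ (-α) * max a (x (Fin.last d)) ^ r := by
  obtain ⟨C, hC, hgrowth⟩ := exists_halfSpaceRpowMeasure_ball_le_rpow d hr
  set s : ℝ := d + 1 + max r 0 with hs
  set p : ℝ := d + 1 + α with hp
  have hsp : s < p := add_lt_add_right (max_lt hrα hα) _
  have hq : 0 < 1 - (2 : ℝ) ^ (s - p) :=
    sub_pos.2 (rpow_lt_one_of_one_lt_of_neg one_lt_two (sub_neg.2 hsp))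
  refine ⟨C * (2 ^ s / (1 - 2 ^ (s - p))), by positivity, fun a ha x => ?_⟩
  have hnonneg : ∀ᵐ y ∂volume.restrict (halfSpace d \ ball x a),
      0 ≤ y (Fin.last d) ^ r / ‖x - y‖ ^ p := by
    filter_upwards [ae_restrict_mem ((measurableSet_halfSpace d).diff measurableSet_ball)]
      with y ⟨hy, _⟩
    exact div_nonneg (rpow_nonneg (le_of_lt hy) r) (by positivity)
  refine integrable_and_integral_le_of_lintegral_ofReal_le
    (Measurable.aestronglyMeasurable (by fun_prop)) hnonneg (by positivity) ?_
  rw [setLIntegral_halfSpace_diff_ball]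
  refine (setLIntegral_compl_ball_dist_rpow_neg_le ha (by positivity) hsp
    (hgrowth x a ha)).trans_eq ?_
  rw [← ENNReal.ofReal_mul (by positivity)]
  have hexp : a ^ (-max r 0) * a ^ (s - p) = a ^ (-α) := by
    rw [← rpow_add ha]
    congr 1
    simp only [hs, hp]
    ring
  rw [← hexp]
  congr 1
  ring

theorem integral_away_from_ball_bound (d : ℕ) (α r : ℝ) (hα0 : 0 < α) (hα2 : α < 2)
    (hr1 : -1 < r) (hrα : r < α) :
    ∃ c : ℝ, 0 < c ∧ ∀ a : ℝ, 0 < a → ∀ x ∈ halfSpace d,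
      (∫ y in halfSpace d \ Metric.ball x a,
          y (Fin.last d) ^ r / ‖x - y‖ ^ ((d : ℝ) + 1 + α)) ≤
        c * a ^ (-α) * max a (x (Fin.last d)) ^ r :=
  let ⟨c, hc, hbound⟩ := integral_away_from_ball_bound_general d hα0 hr1 hrα
  ⟨c, hc, fun a ha x _ => (hbound a ha x).2⟩
end
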